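/- arXiv:2604.07227 — 3 statements merged into one kernel-verified Lean document; each statement's English description precedes it below -/
import Mathlib

section
/- Let (R_n)_{n≥1} be the elephant polynomials with parameter α ∈ [0,1). Then for every x ∈ (−1,1) and every n ≥ 1, |R_n(x)| ≤ |x|^{(1−α)n/8} + 5·e^{−3(1−α)n/280}. -/
open Polynomial

/-- The elephant polynomials: `R_1(x) = x` and
`R_{n+1}(x) = x R_n(x) - (α/n)(1 - x²) R_n'(x)` for `n ≥ 1`. -/
noncomputable def elephantPoly (α : ℝ) : ℕ → Polynomial ℝ
  | 0 => 1
  | 1 => Polynomial.X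
  | n + 2 =>
      Polynomial.X * elephantPoly α (n + 1)
        - Polynomial.C (α / (n + 1)) *
            ((1 - Polynomial.X ^ 2) * Polynomial.derivative (elephantPoly α (n + 1)))

/-!
Let elements arrive one at a time. Each newcomer founds a new cluster with probability `1 - α` and
otherwise joins an existing cluster chosen with probability proportional to its size, so the
cluster sizes `c` form a Markov chain. Since `(1 - X²) T_a' = a (X T_a - T_{a+1})` for the
Chebyshev polynomials, the Leibniz rule turns the recursion defining `R_n` into the transition rule
of this chain, whence `R_n = 𝔼 ∏_{a ∈ c} T_a`.

On `[-1, 1]` we have `|T_a| ≤ 1` and `T_1 = X`, so `|R_n(x)| ≤ 𝔼 |x|^I` with `I` the number of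
singleton clusters. A singleton is created with probability `1 - α` and destroyed with probability
`α I / n`, and `𝔼 exp (-y I) ≤ exp (-(1 - α) n y / 6)` for `y ∈ [0, 1]` by induction on `n`:
averaging over the arrival of a newcomer to `n` elements lowers `y` to `y (1 - 2 / n)` and gains a
factor `exp (-(1 - α) y / 2)`. Splitting according to whether `I` exceeds `(1 - α) n / 8` gives the
bound.
-/

section ClusterChain

/-- The configuration of cluster sizes `c` after a newcomer joins a cluster of size `a ∈ c`. -/
def growCluster (a : ℕ) (c : Multiset ℕ) : Multiset ℕ :=
  (a + 1) ::ₘ c.erase a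

lemma sum_growCluster {a : ℕ} {c : Multiset ℕ} (ha : a ∈ c) :
    (growCluster a c).sum = c.sum + 1 := by
  rw [growCluster, Multiset.sum_cons, ← Multiset.sum_erase ha]
  ring

lemma sum_map_natCast_smul {M : Type*} [AddCommGroup M] [Module ℝ M] (c : Multiset ℕ) (m : M) :
    (c.map fun a : ℕ ↦ (a : ℝ) • m).sum = (c.sum : ℝ) • m := by
  induction c using Multiset.induction_on with
  | empty => simp
  | cons a c ih => simp [ih, add_smul]

/-- The law of the configuration that follows `c` in the cluster chain: the newcomer is a singleton
with probability `1 - α` and joins a given cluster of size `a` with probability `α a / c.sum`.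
Laws are encoded as finitely supported weights. -/
noncomputable def clusterStep (α : ℝ) (c : Multiset ℕ) : Multiset ℕ →₀ ℝ :=
  Finsupp.single (1 ::ₘ c) (1 - α) +
    (c.map fun a : ℕ ↦ Finsupp.single (growCluster a c) (α / c.sum * a)).sum

/-- The law of the cluster sizes of `k + 1` elements. -/
noncomputable def clusterLaw (α : ℝ) : ℕ → Multiset ℕ →₀ ℝ
  | 0 => Finsupp.single {1} 1
  | k + 1 => Finsupp.linearCombination ℝ (clusterStep α) (clusterLaw α k)

/-- The expectation under `clusterLaw α k`, for functions with values in a real vector space. -/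
noncomputable def clusterMean {M : Type*} [AddCommGroup M] [Module ℝ M] (α : ℝ) (k : ℕ) :
    (Multiset ℕ → M) →ₗ[ℝ] M :=
  (Finsupp.bilinearCombination ℝ ℝ).flip (clusterLaw α k)

variable {M N : Type*} [AddCommGroup M] [Module ℝ M] [AddCommGroup N] [Module ℝ N]
  {α : ℝ} {k : ℕ}

lemma clusterMean_apply (F : Multiset ℕ → M) :
    clusterMean α k F = Finsupp.linearCombination ℝ F (clusterLaw α k) :=
  rfl

lemma linearCombination_clusterStep (α : ℝ) (F : Multiset ℕ → M) (c : Multiset ℕ) :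
    Finsupp.linearCombination ℝ F (clusterStep α c) =
      (1 - α) • F (1 ::ₘ c) +
        (α / c.sum) • (c.map fun a : ℕ ↦ (a : ℝ) • F (growCluster a c)).sum := by
  simp only [clusterStep, map_add, map_multiset_sum, Multiset.map_map, Multiset.smul_sum,
    Function.comp_def, Finsupp.linearCombination_single, mul_smul]

lemma linearCombination_clusterStep_const (α : ℝ) {c : Multiset ℕ} (hc : c.sum ≠ 0) (m : M) :
    Finsupp.linearCombination ℝ (fun _ ↦ m) (clusterStep α c) = m := by
  have hc' : (c.sum : ℝ) ≠ 0 := Nat.cast_ne_zero.mpr hc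
  rw [linearCombination_clusterStep, sum_map_natCast_smul, smul_smul, div_mul_cancel₀ _ hc',
    ← add_smul, sub_add_cancel, one_smul]

lemma clusterStep_mem_supported (α : ℝ) (c : Multiset ℕ) :
    clusterStep α c ∈ Finsupp.supported ℝ ℝ {c' | c'.sum = c.sum + 1} := by
  refine Submodule.add_mem _ (Finsupp.single_mem_supported _ _ (by simp [add_comm]))
    (multiset_sum_mem _ fun μ hμ ↦ ?_)
  obtain ⟨a, ha, rfl⟩ := Multiset.mem_map.mp hμ
  exact Finsupp.single_mem_supported _ _ (sum_growCluster ha)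

lemma clusterLaw_mem_supported (α : ℝ) (k : ℕ) :
    clusterLaw α k ∈ Finsupp.supported ℝ ℝ {c | c.sum = k + 1} := by
  induction k with
  | zero => exact Finsupp.single_mem_supported _ _ (by simp)
  | succ k ih =>
    refine Submodule.finsuppSum_mem _ _ _ _ fun c hc ↦ Submodule.smul_mem _ _ ?_
    have hsum : c.sum = k + 1 := ih (Finsupp.mem_support_iff.mpr hc)
    simpa only [hsum] using clusterStep_mem_supported α c

lemma sum_eq_of_mem_support_clusterLaw {c : Multiset ℕ} (hc : c ∈ (clusterLaw α k).support) :
    c.sum = k + 1 :=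
  clusterLaw_mem_supported α k hc

lemma clusterStep_nonneg (hα₀ : 0 ≤ α) (hα₁ : α ≤ 1) (c : Multiset ℕ) : 0 ≤ clusterStep α c := by
  refine add_nonneg (Finsupp.single_nonneg.mpr (sub_nonneg.mpr hα₁))
    (Multiset.sum_nonneg fun μ hμ ↦ ?_)
  obtain ⟨a, -, rfl⟩ := Multiset.mem_map.mp hμ
  exact Finsupp.single_nonneg.mpr (by positivity)

lemma clusterLaw_nonneg (hα₀ : 0 ≤ α) (hα₁ : α ≤ 1) (k : ℕ) : 0 ≤ clusterLaw α k := by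
  induction k with
  | zero => exact Finsupp.single_nonneg.mpr zero_le_one
  | succ k ih =>
    exact Finset.sum_nonneg fun c _ ↦ smul_nonneg (ih c) (clusterStep_nonneg hα₀ hα₁ c)

lemma clusterMean_zero (F : Multiset ℕ → M) : clusterMean α 0 F = F {1} := by
  simp [clusterMean_apply, clusterLaw]

lemma clusterMean_succ (F : Multiset ℕ → M) :
    clusterMean α (k + 1) F =
      clusterMean α k fun c ↦ Finsupp.linearCombination ℝ F (clusterStep α c) :=
  Finsupp.linearCombination_linearCombination ℝ F (clusterStep α) (clusterLaw α k)

lemma map_clusterMean (φ : M →ₗ[ℝ] N) (F : Multiset ℕ → M) :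
    φ (clusterMean α k F) = clusterMean α k fun c ↦ φ (F c) :=
  Finsupp.apply_linearCombination ℝ φ F (clusterLaw α k)

lemma clusterMean_congr {F G : Multiset ℕ → M} (h : ∀ c, c.sum = k + 1 → F c = G c) :
    clusterMean α k F = clusterMean α k G :=
  Finset.sum_congr rfl fun c hc ↦
    congrArg (clusterLaw α k c • ·) (h c (sum_eq_of_mem_support_clusterLaw hc))

lemma clusterMean_const (α : ℝ) (k : ℕ) (m : M) : clusterMean α k (fun _ ↦ m) = m := by
  induction k with
  | zero => exact clusterMean_zero _
  | succ k ih =>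
    rw [clusterMean_succ]
    refine (clusterMean_congr fun c hc ↦ ?_).trans ih
    exact linearCombination_clusterStep_const α (by omega) m

lemma clusterMean_mono (hα₀ : 0 ≤ α) (hα₁ : α ≤ 1) {F G : Multiset ℕ → ℝ}
    (h : ∀ c, c.sum = k + 1 → F c ≤ G c) : clusterMean α k F ≤ clusterMean α k G :=
  Finset.sum_le_sum fun c hc ↦ mul_le_mul_of_nonneg_left
    (h c (sum_eq_of_mem_support_clusterLaw hc)) (clusterLaw_nonneg hα₀ hα₁ k c)

lemma abs_clusterMean_le (hα₀ : 0 ≤ α) (hα₁ : α ≤ 1) (F : Multiset ℕ → ℝ) :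
    |clusterMean α k F| ≤ clusterMean α k fun c ↦ |F c| := by
  refine abs_le.mpr ⟨?_, clusterMean_mono hα₀ hα₁ fun c _ ↦ le_abs_self (F c)⟩
  rw [← map_neg]
  exact clusterMean_mono hα₀ hα₁ fun c _ ↦ neg_abs_le (F c)

end ClusterChain

section ChebyshevProduct

/-- The product of the Chebyshev polynomials `T_a` over the cluster sizes `a ∈ c`; its expectation
under the cluster chain is the elephant polynomial. -/
noncomputable def chebyshevProd (R : Type*) [CommRing R] (c : Multiset ℕ) : R[X] :=
  (c.map fun a : ℕ ↦ Chebyshev.T R a).prod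

variable {R : Type*} [CommRing R]

@[simp]
lemma chebyshevProd_cons (a : ℕ) (c : Multiset ℕ) :
    chebyshevProd R (a ::ₘ c) = Chebyshev.T R a * chebyshevProd R c := by
  simp [chebyshevProd]

lemma one_sub_X_sq_mul_derivative_T (R : Type*) [CommRing R] (n : ℤ) :
    (1 - X ^ 2) * derivative (Chebyshev.T R n) =
      (n : R[X]) * (X * Chebyshev.T R n - Chebyshev.T R (n + 1)) := by
  have h := Chebyshev.one_sub_X_sq_mul_derivative_T_eq_poly_in_T (R := R) (n - 1)
  rw [sub_add_cancel, Chebyshev.T_sub_one] at h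
  rw [h]
  push_cast
  ring

lemma one_sub_X_sq_mul_derivative_chebyshevProd (c : Multiset ℕ) :
    (1 - X ^ 2) * derivative (chebyshevProd R c) =
      (c.sum : R[X]) * (X * chebyshevProd R c) -
        (c.map fun a : ℕ ↦ (a : R[X]) * chebyshevProd R (growCluster a c)).sum := by
  have leibniz_term : ∀ a ∈ c,
      (1 - X ^ 2) * (chebyshevProd R (c.erase a) * derivative (Chebyshev.T R (a : ℤ))) =
        (a : R[X]) * (X * chebyshevProd R c) -
          (a : R[X]) * chebyshevProd R (growCluster a c) := by
    intro a ha
    have hc : chebyshevProd R c = Chebyshev.T R a * chebyshevProd R (c.erase a) := by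
      rw [← chebyshevProd_cons, Multiset.cons_erase ha]
    rw [mul_left_comm, one_sub_X_sq_mul_derivative_T, hc, growCluster, chebyshevProd_cons]
    push_cast
    ring
  calc (1 - X ^ 2) * derivative (chebyshevProd R c)
      = (c.map fun a : ℕ ↦
          (1 - X ^ 2) *
            (chebyshevProd R (c.erase a) * derivative (Chebyshev.T R (a : ℤ)))).sum := by
        rw [chebyshevProd, derivative_prod, Multiset.sum_map_mul_left]
        rfl
    _ = _ := by
        rw [Multiset.map_congr rfl leibniz_term, Multiset.sum_map_sub, Multiset.sum_map_mul_right,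
          Nat.cast_multiset_sum]

lemma abs_eval_chebyshevProd_le {x : ℝ} (hx : |x| ≤ 1) (c : Multiset ℕ) :
    |(chebyshevProd ℝ c).eval x| ≤ |x| ^ c.count 1 := by
  induction c using Multiset.induction_on with
  | empty => simp [chebyshevProd]
  | cons a c ih =>
    rw [chebyshevProd_cons, eval_mul, abs_mul]
    rcases eq_or_ne a 1 with rfl | ha
    · simpa [pow_succ'] using mul_le_mul_of_nonneg_left ih (abs_nonneg x)
    · rw [Multiset.count_cons_of_ne ha.symm]
      exact (mul_le_of_le_one_left (abs_nonneg _)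
        (Chebyshev.abs_eval_T_real_le_one a hx)).trans ih

end ChebyshevProduct

lemma linearCombination_clusterStep_chebyshevProd (α : ℝ) {c : Multiset ℕ} (hc : c.sum ≠ 0) :
    Finsupp.linearCombination ℝ (chebyshevProd ℝ) (clusterStep α c) =
      X * chebyshevProd ℝ c -
        (α / c.sum) • ((1 - X ^ 2) * derivative (chebyshevProd ℝ c)) := by
  have hc' : (c.sum : ℝ) ≠ 0 := Nat.cast_ne_zero.mpr hc
  have cast_smul (n : ℕ) (p : ℝ[X]) : (n : ℝ) • p = (n : ℝ[X]) * p := by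
    rw [Nat.cast_smul_eq_nsmul, nsmul_eq_mul]
  rw [linearCombination_clusterStep, one_sub_X_sq_mul_derivative_chebyshevProd, smul_sub,
    ← cast_smul, smul_smul, div_mul_cancel₀ _ hc', chebyshevProd_cons, Nat.cast_one,
    Chebyshev.T_one, sub_smul, one_smul]
  simp only [cast_smul]
  abel

lemma elephantPoly_succ_eq_clusterMean (α : ℝ) (k : ℕ) :
    elephantPoly α (k + 1) = clusterMean α k (chebyshevProd ℝ) := by
  induction k with
  | zero => simp [clusterMean_zero, elephantPoly, chebyshevProd]
  | succ k ih =>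
    let recursion : ℝ[X] →ₗ[ℝ] ℝ[X] := LinearMap.mulLeft ℝ X -
      (α / (k + 1)) • LinearMap.mulLeft ℝ (1 - X ^ 2) ∘ₗ derivative
    calc elephantPoly α (k + 2)
        = recursion (elephantPoly α (k + 1)) := by
          simp [recursion, elephantPoly, smul_eq_C_mul]
      _ = clusterMean α k fun c ↦ recursion (chebyshevProd ℝ c) := by rw [ih, map_clusterMean]
      _ = clusterMean α k fun c ↦
            Finsupp.linearCombination ℝ (chebyshevProd ℝ) (clusterStep α c) := by
          refine clusterMean_congr fun c hc ↦ ?_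
          simp [linearCombination_clusterStep_chebyshevProd α (c := c) (by omega), hc, recursion]
      _ = clusterMean α (k + 1) (chebyshevProd ℝ) := (clusterMean_succ _).symm

section Singletons

lemma count_one_growCluster_of_ne {a : ℕ} {c : Multiset ℕ} (ha₀ : a ≠ 0) (ha₁ : a ≠ 1) :
    (growCluster a c).count 1 = c.count 1 := by
  rw [growCluster, Multiset.count_cons_of_ne (by omega), Multiset.count_erase_of_ne ha₁.symm]

lemma count_one_growCluster_one (c : Multiset ℕ) :
    (growCluster 1 c).count 1 = c.count 1 - 1 := by
  rw [growCluster, Multiset.count_cons_of_ne (by decide), Multiset.count_erase_self]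

lemma sum_map_mul_exp_neg_count_growCluster (y : ℝ) (c : Multiset ℕ) :
    (c.map fun a : ℕ ↦ (a : ℝ) * Real.exp (-y * (growCluster a c).count 1)).sum =
      (c.sum + c.count 1 * (Real.exp y - 1)) * Real.exp (-y * c.count 1) := by
  have grow_term : ∀ a ∈ c, (a : ℝ) * Real.exp (-y * (growCluster a c).count 1) =
      (a + if a = 1 then Real.exp y - 1 else 0) * Real.exp (-y * c.count 1) := by
    intro a ha
    rcases eq_or_ne a 0 with rfl | ha₀
    · simp
    rcases eq_or_ne a 1 with rfl | ha₁
    · rw [count_one_growCluster_one, Nat.cast_pred (Multiset.count_pos.mpr ha), if_pos rfl,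
        Nat.cast_one, one_mul, add_sub_cancel, ← Real.exp_add]
      ring_nf
    · rw [count_one_growCluster_of_ne ha₀ ha₁, if_neg ha₁, add_zero]
  rw [Multiset.map_congr rfl grow_term, Multiset.sum_map_mul_right, Multiset.sum_map_add,
    ← Nat.cast_multiset_sum, Multiset.sum_map_eq_nsmul_single 1 fun a ha _ ↦ if_neg ha,
    if_pos rfl, nsmul_eq_mul]

lemma exp_sub_one_le_two_mul {y : ℝ} (hy₀ : 0 ≤ y) (hy₁ : y ≤ 1) : Real.exp y - 1 ≤ 2 * y := by
  have h := Real.abs_exp_sub_one_le (abs_le.mpr ⟨by linarith, hy₁⟩)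
  rw [abs_of_nonneg hy₀] at h
  exact (le_abs_self _).trans h

lemma exp_neg_le_one_sub_half {y : ℝ} (hy₀ : 0 ≤ y) (hy₁ : y ≤ 1) :
    Real.exp (-y) ≤ 1 - y / 2 := by
  rw [Real.exp_neg, inv_le_iff_one_le_mul₀ (Real.exp_pos y)]
  calc 1 ≤ (1 - y / 2) * (y + 1) := by nlinarith
    _ ≤ (1 - y / 2) * Real.exp y := by
      gcongr
      · linarith
      · exact Real.add_one_le_exp y

variable {α y : ℝ}

lemma linearCombination_clusterStep_exp_neg_count_le (hα₁ : α ≤ 1) (hy₀ : 0 ≤ y) (hy₁ : y ≤ 1)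
    {c : Multiset ℕ} (hc : c.sum ≠ 0) :
    Finsupp.linearCombination ℝ (fun c' ↦ Real.exp (-y * c'.count 1)) (clusterStep α c) ≤
      Real.exp (-((1 - α) * y / 2)) * Real.exp (-(y * (1 - 2 / c.sum)) * c.count 1) := by
  have hc' : (c.sum : ℝ) ≠ 0 := Nat.cast_ne_zero.mpr hc
  set I : ℝ := ((c.count 1 : ℕ) : ℝ) with hI
  have birth : (1 - α) * Real.exp (-y) ≤ (1 - α) * (1 - y / 2) :=
    mul_le_mul_of_nonneg_left (exp_neg_le_one_sub_half hy₀ hy₁) (sub_nonneg.mpr hα₁)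
  have death : α / c.sum * (I * (Real.exp y - 1)) ≤ 2 * y / c.sum * I := by
    calc α / c.sum * (I * (Real.exp y - 1)) ≤ 1 / c.sum * (I * (2 * y)) := by
          gcongr
          · exact mul_nonneg (Nat.cast_nonneg _) (sub_nonneg.mpr (Real.one_le_exp hy₀))
          · exact exp_sub_one_le_two_mul hy₀ hy₁
      _ = 2 * y / c.sum * I := by ring
  calc Finsupp.linearCombination ℝ (fun c' ↦ Real.exp (-y * c'.count 1)) (clusterStep α c)
      = ((1 - α) * Real.exp (-y) + α + α / c.sum * (I * (Real.exp y - 1))) *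
          Real.exp (-y * I) := by
        simp only [linearCombination_clusterStep, smul_eq_mul, Multiset.count_cons_self,
          sum_map_mul_exp_neg_count_growCluster, Nat.cast_add, Nat.cast_one, ← hI, mul_add,
          mul_one, Real.exp_add]
        linear_combination Real.exp (-y * I) * div_mul_cancel₀ α hc'
    _ ≤ Real.exp (-((1 - α) * y / 2) + 2 * y / c.sum * I) * Real.exp (-y * I) := by
        gcongr
        refine le_trans ?_ (Real.add_one_le_exp _)
        linarith
    _ = Real.exp (-((1 - α) * y / 2)) * Real.exp (-(y * (1 - 2 / c.sum)) * I) := by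
        rw [← Real.exp_add, ← Real.exp_add]
        ring_nf

lemma clusterMean_succ_exp_neg_count_le (hα₀ : 0 ≤ α) (hα₁ : α ≤ 1) (hy₀ : 0 ≤ y) (hy₁ : y ≤ 1)
    (k : ℕ) :
    clusterMean α (k + 1) (fun c ↦ Real.exp (-y * c.count 1)) ≤
      Real.exp (-((1 - α) * y / 2)) *
        clusterMean α k fun c ↦ Real.exp (-(y * (1 - 2 / (k + 1))) * c.count 1) := by
  rw [clusterMean_succ, ← smul_eq_mul, ← map_smul]
  refine clusterMean_mono hα₀ hα₁ fun c hc ↦ ?_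
  simpa [hc] using
    linearCombination_clusterStep_exp_neg_count_le hα₁ hy₀ hy₁ (c := c) (by omega)

lemma clusterMean_one_exp_neg_count (α y : ℝ) :
    clusterMean α 1 (fun c ↦ Real.exp (-y * c.count 1)) = (1 - α) * Real.exp (-y * 2) + α := by
  simp [clusterMean_succ, clusterMean_zero, linearCombination_clusterStep, growCluster,
    one_add_one_eq_two]

lemma clusterMean_exp_neg_count_le (hα₀ : 0 ≤ α) (hα₁ : α ≤ 1) (k : ℕ) (hy₀ : 0 ≤ y)
    (hy₁ : y ≤ 1) :
    clusterMean α k (fun c ↦ Real.exp (-y * c.count 1)) ≤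
      Real.exp (-((1 - α) * (k + 1) * y / 6)) := by
  have hα : 0 ≤ 1 - α := sub_nonneg.mpr hα₁
  rcases k with _ | k
  · rw [clusterMean_zero, Multiset.count_singleton_self]
    refine Real.exp_le_exp.mpr ?_
    push_cast
    linarith [mul_nonneg hα₀ hy₀]
  induction k generalizing y with
  | zero =>
    have hexp : Real.exp (-y * 2) ≤ 1 - y / 3 :=
      calc Real.exp (-y * 2) ≤ Real.exp (-y) := by gcongr; linarith
        _ ≤ 1 - y / 2 := exp_neg_le_one_sub_half hy₀ hy₁
        _ ≤ 1 - y / 3 := by linarith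
    rw [zero_add, clusterMean_one_exp_neg_count]
    refine le_trans ?_ (Real.add_one_le_exp _)
    linarith [mul_le_mul_of_nonneg_left hexp hα]
  | succ k ih =>
    have hshrink₀ : (0 : ℝ) ≤ 1 - 2 / ((k + 1 : ℕ) + 1) := by
      rw [sub_nonneg, div_le_one (by positivity)]
      push_cast
      linarith [k.cast_nonneg (α := ℝ)]
    have hshrink₁ : (1 : ℝ) - 2 / ((k + 1 : ℕ) + 1) ≤ 1 := sub_le_self _ (by positivity)
    refine (clusterMean_succ_exp_neg_count_le hα₀ hα₁ hy₀ hy₁ (k + 1)).trans ?_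
    refine (mul_le_mul_of_nonneg_left (ih (mul_nonneg hy₀ hshrink₀)
      (mul_le_one₀ hy₁ hshrink₀ hshrink₁)) (Real.exp_pos _).le).trans_eq ?_
    rw [← Real.exp_add]
    congr 1
    push_cast
    field_simp
    ring

end Singletons

lemma pow_le_rpow_add_exp {r a : ℝ} (hr₀ : 0 ≤ r) (hr₁ : r ≤ 1) (ha : 0 ≤ a) (m : ℕ) :
    r ^ m ≤ r ^ a + Real.exp (a - m) := by
  rcases le_total a m with ham | hma
  · calc r ^ m = r ^ (m : ℝ) := (Real.rpow_natCast r m).symm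
      _ ≤ r ^ a := Real.rpow_le_rpow_of_exponent_ge' hr₀ hr₁ ha ham
      _ ≤ r ^ a + Real.exp (a - m) := le_add_of_nonneg_right (Real.exp_pos _).le
  · calc r ^ m ≤ 1 := pow_le_one₀ hr₀ hr₁
      _ ≤ Real.exp (a - m) := Real.one_le_exp (sub_nonneg.mpr hma)
      _ ≤ r ^ a + Real.exp (a - m) := le_add_of_nonneg_left (Real.rpow_nonneg hr₀ a)

lemma abs_eval_elephantPoly_succ_le {α x a : ℝ} (hα₀ : 0 ≤ α) (hα₁ : α ≤ 1) (hx : |x| ≤ 1)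
    (ha : 0 ≤ a) (k : ℕ) :
    |(elephantPoly α (k + 1)).eval x| ≤ |x| ^ a + Real.exp (a - (1 - α) * (k + 1) / 6) := by
  have hchernoff : clusterMean α k (fun c ↦ Real.exp (a - c.count 1)) ≤
      Real.exp (a - (1 - α) * (k + 1) / 6) := by
    have hsplit : (fun c : Multiset ℕ ↦ Real.exp (a - c.count 1)) =
        Real.exp a • fun c ↦ Real.exp (-1 * c.count 1) := by
      ext c
      simp [sub_eq_add_neg, Real.exp_add]
    rw [hsplit, map_smul, smul_eq_mul, sub_eq_add_neg a, Real.exp_add]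
    gcongr
    simpa using clusterMean_exp_neg_count_le hα₀ hα₁ k zero_le_one le_rfl
  calc |(elephantPoly α (k + 1)).eval x|
      = |clusterMean α k fun c ↦ (chebyshevProd ℝ c).eval x| := by
        rw [elephantPoly_succ_eq_clusterMean]
        exact congrArg abs (map_clusterMean (leval x) _)
    _ ≤ clusterMean α k fun c ↦ |(chebyshevProd ℝ c).eval x| := abs_clusterMean_le hα₀ hα₁ _
    _ ≤ clusterMean α k ((fun _ ↦ |x| ^ a) + fun c ↦ Real.exp (a - c.count 1)) :=
        clusterMean_mono hα₀ hα₁ fun c _ ↦ (abs_eval_chebyshevProd_le hx c).trans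
          (pow_le_rpow_add_exp (abs_nonneg x) hx ha _)
    _ = |x| ^ a + clusterMean α k fun c ↦ Real.exp (a - c.count 1) := by
        rw [map_add, clusterMean_const]
    _ ≤ |x| ^ a + Real.exp (a - (1 - α) * (k + 1) / 6) := by gcongr

/-- **Exponential decay of the elephant polynomials on `(-1, 1)`.**  If `α ∈ [0,1)`,
then for every `x ∈ (-1,1)` and every `n ≥ 1`,
`|R_n(x)| ≤ |x|^{(1-α)n/8} + 5 e^{-3(1-α)n/280}`. -/
theorem elephantPoly_decay (α : ℝ) (hα0 : 0 ≤ α) (hα1 : α < 1)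
    (x : ℝ) (hx : x ∈ Set.Ioo (-1 : ℝ) 1) (n : ℕ) (hn : 1 ≤ n) :
    |(elephantPoly α n).eval x|
      ≤ |x| ^ ((1 - α) * n / 8) + 5 * Real.exp (-(3 * (1 - α) * n) / 280) := by
  obtain ⟨k, rfl⟩ := Nat.exists_eq_add_of_le' hn
  have hα : 0 ≤ 1 - α := sub_nonneg.mpr hα1.le
  have hrate : (1 - α) * (k + 1 : ℕ) / 8 - (1 - α) * (k + 1) / 6 ≤
      -(3 * (1 - α) * (k + 1 : ℕ)) / 280 := by
    push_cast
    linear_combination (13 / 420 : ℝ) * mul_nonneg hα (by positivity : (0 : ℝ) ≤ k + 1)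
  calc |(elephantPoly α (k + 1)).eval x|
      ≤ |x| ^ ((1 - α) * (k + 1 : ℕ) / 8) +
          Real.exp ((1 - α) * (k + 1 : ℕ) / 8 - (1 - α) * (k + 1) / 6) :=
        abs_eval_elephantPoly_succ_le hα0 hα1.le (abs_le.mpr ⟨hx.1.le, hx.2.le⟩)
          (by positivity) k
    _ ≤ |x| ^ ((1 - α) * (k + 1 : ℕ) / 8) +
          Real.exp (-(3 * (1 - α) * (k + 1 : ℕ)) / 280) := by gcongr
    _ ≤ _ := by
        gcongr
        exact le_mul_of_one_le_left (Real.exp_pos _).le (by norm_num)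
end

section
/- Let α ∈ [0,1] and let (R_n)_{n≥1} be the elephant polynomials with parameter α. Then for every n ≥ 1 there exist unique non-negative numbers λ_{n,k}, k = 0,1,…,⌊n/2⌋, such that R_n(x) = Σ_{k=0}^{⌊n/2⌋} (−1)^k·λ_{n,k}·x^{n−2k}·(1−x²)^k for all x ∈ ℝ, and moreover these coefficients satisfy e^{−(1−α)n/(3+α)}·C(n,2k)·α^k ≤ λ_{n,k} ≤ C(n,2k)·α^k for all n ≥ 1 and k ∈ {0,1,…,⌊n/2⌋}, where C(n,2k) denotes the binomial coefficient. -/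
open Polynomial

/-!
The basis polynomials `x^{n-2k} (1-x²)^k` are mapped by the recursion to combinations of two
consecutive ones, which gives a positive two-term recursion for `λ_{n,k}`. Uniqueness holds because
dividing by `x^n` turns the expansion into a polynomial in `y = (1-x²)/x²`, which takes
infinitely many values.

The ratios `μ_{n,k} = λ_{n,k} / (C(n,2k) α^k)` satisfy a recursion with non-negative weights that is
affine in `α` and whose total weight is `1 - (1-α) j (n+1-j) / (n (n+1))`, where `j = 2k`. This is
at most `1`, hence the upper bound. Near `j = n/2` it is slightly below `1 - (1-α)/4`, so that
`e^{-tn}` with `t = (1-α)/(3+α)` just fails to be preserved from below, and one proves instead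
`μ_{n,k} ≥ e^{t (E(n,j) - n)}` with a rational correction `E ≥ 0`. Linearising the exponential,
the induction step reduces to polynomial inequalities in `n` and `j` at the endpoints `α = 1` and
`α = 0`, together with `(1+t) e^{-t} ≤ 1 - (2/5) t²` on `[0, 1/3]`.
-/

/-- The operator taking the `n`-th elephant polynomial to the next one. For `n = 0` the
convention `x / 0 = 0` makes it multiplication by `X`, which takes `R_0 = 1` to `R_1`. -/
noncomputable def elephantStep (α : ℝ) (n : ℕ) : ℝ[X] →ₗ[ℝ] ℝ[X] :=
  LinearMap.mulLeft ℝ X - (α / n) • LinearMap.mulLeft ℝ (1 - X ^ 2) ∘ₗ derivative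

/-- The polynomial `x^{n-2k} (1-x²)^k`; these span the space in which the `n`-th elephant
polynomial is expanded. Because of truncated subtraction it is meaningful only for `2k ≤ n`. -/
noncomputable def basisPoly (n k : ℕ) : ℝ[X] :=
  X ^ (n - 2 * k) * (1 - X ^ 2) ^ k

/-- The right-hand side of the recursion expressing `λ_{n+1,k+1}` through `a = λ_{n,k+1}` and
`b = λ_{n,k}`. For `n = 0` the convention `x / 0 = 0` makes it equal to `a`. -/
noncomputable def coeffStep (α : ℝ) (n k : ℕ) (a b : ℝ) : ℝ :=
  (1 + 2 * (k + 1) * α / n) * a + α * (n - 2 * k) / n * b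

/-- The coefficient `λ_{n,k}` of `(-1)^k x^{n-2k} (1-x²)^k` in the `n`-th elephant polynomial. -/
noncomputable def elephantCoeff (α : ℝ) : ℕ → ℕ → ℝ
  | 0, 0 => 1
  | 0, _ + 1 => 0
  | n + 1, 0 => elephantCoeff α n 0
  | n + 1, k + 1 => coeffStep α n k (elephantCoeff α n (k + 1)) (elephantCoeff α n k)

section Expansion

variable {α : ℝ} {n k : ℕ}

theorem elephantPoly_succ (α : ℝ) (n : ℕ) :
    elephantPoly α (n + 1) = elephantStep α n (elephantPoly α n) := by
  cases n <;> simp [elephantPoly, elephantStep, smul_eq_C_mul]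

@[simp]
theorem elephantCoeff_zero_right (α : ℝ) (n : ℕ) : elephantCoeff α n 0 = 1 := by
  induction n with
  | zero => rfl
  | succ n ih => rw [elephantCoeff, ih]

theorem elephantCoeff_eq_zero_of_lt (h : n < 2 * k) : elephantCoeff α n k = 0 := by
  induction n generalizing k with
  | zero =>
    obtain ⟨k, rfl⟩ := Nat.exists_eq_succ_of_ne_zero (show k ≠ 0 by omega)
    rfl
  | succ n ih =>
    obtain ⟨k, rfl⟩ := Nat.exists_eq_succ_of_ne_zero (show k ≠ 0 by omega)
    rw [elephantCoeff, ih (by omega), coeffStep]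
    rcases (show n ≤ 2 * k by omega).lt_or_eq with hlt | rfl
    · simp [ih hlt]
    · simp

theorem X_mul_basisPoly (h : 2 * k ≤ n) : X * basisPoly n k = basisPoly (n + 1) k := by
  rw [basisPoly, basisPoly, Nat.sub_add_comm h, pow_succ']
  ring

theorem one_sub_X_sq_mul_derivative_basisPoly (h : 2 * k ≤ n) :
    (1 - X ^ 2) * derivative (basisPoly n k) =
      (n - 2 * k : ℝ) • basisPoly (n + 1) (k + 1) - (2 * k : ℝ) • basisPoly (n + 1) k := by
  obtain ⟨m, rfl⟩ := Nat.exists_eq_add_of_le h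
  have hm : 2 * k + m + 1 - 2 * k = m + 1 := by omega
  have hm' : 2 * k + m + 1 - 2 * (k + 1) = m - 1 := by omega
  simp only [basisPoly, smul_eq_C_mul, Nat.add_sub_cancel_left, hm, hm']
  cases k <;> simp [derivative_mul, derivative_pow] <;> ring

theorem elephantStep_basisPoly (α : ℝ) (h : 2 * k ≤ n) :
    elephantStep α n (basisPoly n k) =
      (1 + 2 * k * α / n) • basisPoly (n + 1) k -
        (α * (n - 2 * k) / n) • basisPoly (n + 1) (k + 1) := by
  simp only [elephantStep, LinearMap.sub_apply, LinearMap.smul_apply, LinearMap.comp_apply,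
    LinearMap.mulLeft_apply, X_mul_basisPoly h, one_sub_X_sq_mul_derivative_basisPoly h]
  module

theorem elephantStep_elephantCoeff_smul_basisPoly (α : ℝ) (n k : ℕ) :
    elephantStep α n (((-1) ^ k * elephantCoeff α n k) • basisPoly n k) =
      ((-1) ^ k * ((1 + 2 * k * α / n) * elephantCoeff α n k)) • basisPoly (n + 1) k +
        ((-1) ^ (k + 1) * (α * (n - 2 * k) / n * elephantCoeff α n k)) •
          basisPoly (n + 1) (k + 1) := by
  rcases Nat.lt_or_ge n (2 * k) with h | h
  · simp [elephantCoeff_eq_zero_of_lt h]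
  · rw [map_smul, elephantStep_basisPoly α h, pow_succ]
    module

theorem elephantPoly_eq_sum (α : ℝ) (n : ℕ) :
    elephantPoly α n =
      ∑ k ∈ Finset.range (n + 1), ((-1) ^ k * elephantCoeff α n k) • basisPoly n k := by
  induction n with
  | zero => simp [elephantPoly, basisPoly]
  | succ n ih =>
    have shift : ∑ k ∈ Finset.range (n + 1),
          ((-1) ^ k * ((1 + 2 * k * α / n) * elephantCoeff α n k)) • basisPoly (n + 1) k =
        ∑ k ∈ Finset.range (n + 1), ((-1) ^ (k + 1) *
          ((1 + 2 * ((k : ℝ) + 1) * α / n) * elephantCoeff α n (k + 1))) •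
            basisPoly (n + 1) (k + 1) + basisPoly (n + 1) 0 := by
      have hlast : elephantCoeff α n (n + 1) = 0 := elephantCoeff_eq_zero_of_lt (by omega)
      have hsum := Finset.sum_range_succ (fun k : ℕ =>
        ((-1) ^ k * ((1 + 2 * k * α / n) * elephantCoeff α n k)) • basisPoly (n + 1) k) (n + 1)
      rw [hlast, mul_zero, mul_zero, zero_smul, add_zero, Finset.sum_range_succ'] at hsum
      simpa using hsum.symm
    rw [elephantPoly_succ, ih, map_sum, Finset.sum_range_succ' _ (n + 1)]
    simp only [elephantStep_elephantCoeff_smul_basisPoly, Finset.sum_add_distrib, shift,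
      elephantCoeff, coeffStep, mul_add, add_smul, elephantCoeff_zero_right, pow_zero, mul_one,
      one_smul]
    abel

theorem eval_elephantPoly (α : ℝ) (n : ℕ) (x : ℝ) :
    (elephantPoly α n).eval x =
      ∑ k ∈ Finset.range (n / 2 + 1),
        (-1 : ℝ) ^ k * elephantCoeff α n k * x ^ (n - 2 * k) * (1 - x ^ 2) ^ k := by
  have hsub : Finset.range (n / 2 + 1) ⊆ Finset.range (n + 1) := by
    rw [Finset.range_subset_range]
    omega
  rw [elephantPoly_eq_sum, eval_finsetSum]
  simp only [basisPoly, eval_smul, eval_mul, eval_pow, eval_X, eval_sub, eval_one, smul_eq_mul,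
    ← mul_assoc]
  refine (Finset.sum_subset hsub fun k _ hk => ?_).symm
  have hk : n < 2 * k := by
    rw [Finset.mem_range] at hk
    omega
  simp [elephantCoeff_eq_zero_of_lt hk]

end Expansion

section Uniqueness

variable {K : Type*} [Field K]

theorem sum_mul_pow_mul_pow_eq_pow_mul_eval (n : ℕ) (c : ℕ → K) {x : K} (hx : x ≠ 0) :
    ∑ k ∈ Finset.range (n / 2 + 1), c k * x ^ (n - 2 * k) * (1 - x ^ 2) ^ k =
      x ^ n * (∑ k ∈ Finset.range (n / 2 + 1), monomial k (c k)).eval ((1 - x ^ 2) / x ^ 2) := by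
  rw [eval_finsetSum, Finset.mul_sum]
  refine Finset.sum_congr rfl fun k hk => ?_
  obtain ⟨m, rfl⟩ : ∃ m, n = 2 * k + m := Nat.exists_eq_add_of_le (by
    rw [Finset.mem_range] at hk
    omega)
  rw [eval_monomial, Nat.add_sub_cancel_left, pow_add, pow_mul, div_pow]
  field_simp

theorem infinite_image_one_sub_sq_div_sq [Infinite K] :
    ((fun x : K => (1 - x ^ 2) / x ^ 2) '' {0}ᶜ).Infinite := by
  refine fun hfin => (Set.finite_singleton (0 : K)).infinite_compl
    (Set.Finite.of_finite_fibers _ hfin fun y _ => ?_)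
  have hne : C (1 + y) * X ^ 2 - 1 ≠ 0 := fun h => by
    simpa using congrArg (eval 0) h
  refine (finite_setOfPred_isRoot hne).subset fun x hx => ?_
  have hx₀ : x ≠ 0 := hx.1
  have hxy : (1 - x ^ 2) / x ^ 2 = y := hx.2
  rw [div_eq_iff (pow_ne_zero 2 hx₀)] at hxy
  simp only [Set.mem_ofPred_eq, IsRoot.def, eval_sub, eval_mul, eval_C, eval_pow, eval_X, eval_one]
  linear_combination -hxy

theorem coeff_eq_of_sum_mul_pow_mul_pow_eq [Infinite K] {n : ℕ} {a b : ℕ → K}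
    (h : ∀ x : K, ∑ k ∈ Finset.range (n / 2 + 1), a k * x ^ (n - 2 * k) * (1 - x ^ 2) ^ k =
      ∑ k ∈ Finset.range (n / 2 + 1), b k * x ^ (n - 2 * k) * (1 - x ^ 2) ^ k)
    {k : ℕ} (hk : k ≤ n / 2) : a k = b k := by
  have heq : ∑ k ∈ Finset.range (n / 2 + 1), monomial k (a k) =
      ∑ k ∈ Finset.range (n / 2 + 1), monomial k (b k) := by
    refine eq_of_infinite_eval_eq _ _ (infinite_image_one_sub_sq_div_sq.mono ?_)
    rintro _ ⟨x, hx, rfl⟩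
    have hx₀ : x ≠ 0 := hx
    have hsum := h x
    rw [sum_mul_pow_mul_pow_eq_pow_mul_eval n a hx₀,
      sum_mul_pow_mul_pow_eq_pow_mul_eval n b hx₀] at hsum
    exact mul_left_cancel₀ (pow_ne_zero n hx₀) hsum
  simpa [finsetSum_coeff, coeff_monomial, Nat.lt_succ_of_le hk] using congrArg (coeff · k) heq

end Uniqueness

section NormalizedStep

/-- The recursion satisfied by the ratios `λ_{n,k} / (C(n,2k) α^k)`, written in terms of `j = 2k`:
`a` and `b` are the ratios for `(n, j)` and `(n, j - 2)`, the value is the one for `(n + 1, j)`. -/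
noncomputable def normalizedStep (α n j a b : ℝ) : ℝ :=
  ((n + 1 - j) * (n + α * j) * a + j * (j - 1) * b) / (n * (n + 1))

variable {α n j : ℝ}

theorem normalizedStep_mono (hα : 0 ≤ α) (hj : 1 ≤ j) (hjn : j ≤ n + 1) {a a' b b' : ℝ}
    (ha : a ≤ a') (hb : b ≤ b') : normalizedStep α n j a b ≤ normalizedStep α n j a' b' := by
  have hn : 0 ≤ n := by linarith
  have h₁ : 0 ≤ (n + 1 - j) * (n + α * j) := mul_nonneg (by linarith) (by positivity)
  have h₂ : 0 ≤ j * (j - 1) := mul_nonneg (by linarith) (by linarith)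
  exact div_le_div_of_nonneg_right (add_le_add (mul_le_mul_of_nonneg_left ha h₁)
    (mul_le_mul_of_nonneg_left hb h₂)) (by positivity)

theorem mul_normalizedStep (c α n j a b : ℝ) :
    c * normalizedStep α n j a b = normalizedStep α n j (c * a) (c * b) := by
  unfold normalizedStep
  ring

theorem normalizedStep_eq_interpolation (α n j a b : ℝ) :
    normalizedStep α n j a b =
      α * normalizedStep 1 n j a b + (1 - α) * normalizedStep 0 n j a b := by
  unfold normalizedStep
  ring

theorem normalizedStep_one_one_one (hn : 0 < n) : normalizedStep 1 n j 1 1 = 1 := by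
  unfold normalizedStep
  field_simp
  ring

theorem normalizedStep_one_one_le (hα : α ≤ 1) (hn : 0 < n) (hj : 0 ≤ j) (hjn : j ≤ n + 1) :
    normalizedStep α n j 1 1 ≤ 1 := by
  have h : 0 ≤ (1 - α) * (j * (n + 1 - j)) :=
    mul_nonneg (by linarith) (mul_nonneg hj (by linarith))
  rw [normalizedStep, div_le_one (by positivity)]
  linarith

end NormalizedStep

section Comparison

variable {α : ℝ} {n k : ℕ}

theorem coeffStep_mono (hα : 0 ≤ α) (hk : 2 * k ≤ n) {a a' b b' : ℝ} (ha : a ≤ a')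
    (hb : b ≤ b') : coeffStep α n k a b ≤ coeffStep α n k a' b' := by
  have h : (0 : ℝ) ≤ n - 2 * k := sub_nonneg.2 (by exact_mod_cast hk)
  unfold coeffStep
  gcongr

theorem coeffStep_choose (α : ℝ) (hk : 2 * (k + 1) ≤ n + 1) (a b : ℝ) :
    coeffStep α n k (n.choose (2 * (k + 1)) * α ^ (k + 1) * a) (n.choose (2 * k) * α ^ k * b) =
      (n + 1).choose (2 * (k + 1)) * α ^ (k + 1) *
        normalizedStep α n (2 * (k + 1)) a b := by
  have hn : (n : ℝ) ≠ 0 := Nat.cast_ne_zero.2 (by omega)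
  have hupper : (n.choose (2 * (k + 1)) : ℝ) * (n + 1) =
      (n + 1).choose (2 * (k + 1)) * (n + 1 - 2 * (k + 1)) := by
    have h := congrArg (Nat.cast (R := ℝ)) (Nat.choose_mul_succ_eq n (2 * (k + 1)))
    simpa [Nat.cast_sub hk] using h
  have hlower : (n.choose (2 * k + 1) : ℝ) * (2 * k + 1) = n.choose (2 * k) * (n - 2 * k) := by
    have h := congrArg (Nat.cast (R := ℝ)) (Nat.choose_succ_right_eq n (2 * k))
    simpa [Nat.cast_sub (show 2 * k ≤ n by omega)] using h
  have hdiag : ((n : ℝ) + 1) * n.choose (2 * k + 1) =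
      (n + 1).choose (2 * (k + 1)) * (2 * (k + 1)) := by
    have h := congrArg (Nat.cast (R := ℝ)) (Nat.add_one_mul_choose_eq n (2 * k + 1))
    push_cast at h
    linear_combination h
  unfold coeffStep normalizedStep
  field_simp
  linear_combination (n + α * (2 * (k + 1))) * a * α ^ (k + 1) * hupper -
    (n + 1) * b * α ^ (k + 1) * hlower + (2 * k + 1) * b * α ^ (k + 1) * hdiag

theorem elephantCoeff_le_choose_mul_pow (hα₀ : 0 ≤ α) (hα₁ : α ≤ 1) (n k : ℕ) :
    elephantCoeff α n k ≤ n.choose (2 * k) * α ^ k := by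
  induction n generalizing k with
  | zero =>
    cases k
    · simp
    · exact mul_nonneg (by positivity) (by positivity)
  | succ n ih =>
    rcases k with _ | k
    · simp
    rcases Nat.lt_or_ge (n + 1) (2 * (k + 1)) with h | h
    · simp [elephantCoeff_eq_zero_of_lt h, Nat.choose_eq_zero_of_lt h]
    have hn : (0 : ℝ) < n := Nat.cast_pos.2 (by omega)
    calc elephantCoeff α (n + 1) (k + 1)
        ≤ coeffStep α n k (n.choose (2 * (k + 1)) * α ^ (k + 1) * 1)
            (n.choose (2 * k) * α ^ k * 1) := by
          rw [elephantCoeff, mul_one, mul_one]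
          exact coeffStep_mono hα₀ (by omega) (ih _) (ih _)
      _ = (n + 1).choose (2 * (k + 1)) * α ^ (k + 1) * normalizedStep α n (2 * (k + 1)) 1 1 :=
          coeffStep_choose α h 1 1
      _ ≤ (n + 1).choose (2 * (k + 1)) * α ^ (k + 1) := by
          refine mul_le_of_le_one_right (by positivity)
            (normalizedStep_one_one_le hα₁ hn (by positivity) ?_)
          exact_mod_cast h

theorem choose_mul_pow_mul_le_elephantCoeff (hα : 0 ≤ α) {f : ℕ → ℕ → ℝ}
    (hzero : ∀ n, 2 ≤ n → f n 0 ≤ 1) (htwo : f 2 1 ≤ 1)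
    (hstep : ∀ n k, 2 ≤ n → 2 * (k + 1) ≤ n + 1 →
      f (n + 1) (k + 1) ≤ normalizedStep α n (2 * (k + 1)) (f n (k + 1)) (f n k))
    (hn : 2 ≤ n) (k : ℕ) : n.choose (2 * k) * α ^ k * f n k ≤ elephantCoeff α n k := by
  induction n, hn using Nat.le_induction generalizing k with
  | base =>
    rcases k with _ | _ | k
    · simpa using hzero 2 le_rfl
    · simpa [elephantCoeff, coeffStep] using mul_le_of_le_one_right hα htwo
    · simp [elephantCoeff_eq_zero_of_lt, Nat.choose_eq_zero_of_lt,
        show 2 < 2 * (k + 1 + 1) by omega]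
  | succ n hn ih =>
    rcases k with _ | k
    · simpa using hzero (n + 1) (by omega)
    rcases Nat.lt_or_ge (n + 1) (2 * (k + 1)) with h | h
    · simp [elephantCoeff_eq_zero_of_lt h, Nat.choose_eq_zero_of_lt h]
    calc (n + 1).choose (2 * (k + 1)) * α ^ (k + 1) * f (n + 1) (k + 1)
        ≤ (n + 1).choose (2 * (k + 1)) * α ^ (k + 1) *
            normalizedStep α n (2 * (k + 1)) (f n (k + 1)) (f n k) := by
          gcongr
          exact hstep n k hn h
      _ = coeffStep α n k (n.choose (2 * (k + 1)) * α ^ (k + 1) * f n (k + 1))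
            (n.choose (2 * k) * α ^ k * f n k) := (coeffStep_choose α h _ _).symm
      _ ≤ elephantCoeff α (n + 1) (k + 1) := coeffStep_mono hα (by omega) (ih _) (ih _)

end Comparison

section Excess

/-- With `t = (1-α)/(3+α)` and `j = 2k`, the ratio `λ_{n,k} / (C(n,2k) α^k)` is at least
`exp (t * (excess n j - n))`. In terms of `s = (2j-n)/n`, the leading part of `excess n j` is
`n * (s²/3 - s³/6)`; the second factor is the cubic Taylor polynomial at `0` of the solution of
`g + (s + s²) g' = s²`, the limit for large `n` of the recursion for the term of first order
in `t`. The lower-order terms make the one-step inequalities below valid for every `n`. -/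
noncomputable def excess (n j : ℝ) : ℝ :=
  ((2 * j - n) ^ 2 * (3 * n - 2 * j - 3) + 3 * n * (2 * j - n) + 30 * n) / (6 * n * (n + 1))

variable {n j : ℝ}

theorem excess_nonneg (hn : 2 ≤ n) (hj : 0 ≤ j) (hjn : j ≤ n) : 0 ≤ excess n j := by
  refine div_nonneg ?_ (by positivity)
  nlinarith [mul_nonneg (sq_nonneg (2 * j - n)) (sub_nonneg.2 hjn),
    mul_nonneg (sq_nonneg (2 * j - n)) (sub_nonneg.2 hn), mul_nonneg hj (sub_nonneg.2 hjn),
    sq_nonneg (2 * j - n + 2)]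

theorem excess_zero_right_le (hn : 2 ≤ n) : excess n 0 ≤ n := by
  have h : 0 ≤ n * (n - 2) := mul_nonneg (by linarith) (by linarith)
  rw [excess, div_le_iff₀ (by positivity)]
  nlinarith [mul_nonneg h (sub_nonneg.2 hn)]

-- The numerator of the difference of the two sides in `excess_le_normalizedStep_one`, where
-- `p = j - 2` and `l = n + 1 - j`.
theorem excess_step_one_numerator_nonneg {p l : ℝ} (hp : 0 ≤ p) (hl : 0 ≤ l) :
    0 ≤ 3 * (p + l) * (p - l) ^ 4 +
      (31 * p ^ 4 - 88 * p ^ 3 * l + 62 * p ^ 2 * l ^ 2 + 16 * p * l ^ 3 - 21 * l ^ 4) +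
      (148 * p ^ 3 - 260 * p ^ 2 * l + 228 * p * l ^ 2 + 44 * l ^ 3) +
      (321 * p ^ 2 - 378 * p * l + 181 * l ^ 2) + (299 * p - 237 * l) + 98 := by
  rcases le_total l p with h | h
  · obtain ⟨r, hr, rfl⟩ : ∃ r, 0 ≤ r ∧ p = l + r := ⟨p - l, by linarith, by ring⟩
    have h₁ : 0 ≤ l * (160 * l ^ 2 - 16 * r ^ 2 * l + 6 * r ^ 4) :=
      mul_nonneg hl (by nlinarith [sq_nonneg (20 * l - r ^ 2)])
    have h₂ : 0 ≤ 98 + 62 * l + 299 * r + 124 * l ^ 2 + 264 * r * l + 321 * r ^ 2 +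
      152 * r * l ^ 2 + 184 * r ^ 2 * l + 148 * r ^ 3 + 36 * r ^ 3 * l + 31 * r ^ 4 +
      3 * r ^ 5 := by positivity
    linarith
  · obtain ⟨r, hr, rfl⟩ : ∃ r, 0 ≤ r ∧ l = p + r := ⟨l - p, by linarith, by ring⟩
    have h₁ : 0 ≤ r ^ 3 * (3 * r ^ 2 - 21 * r + 44) :=
      mul_nonneg (by positivity) (by nlinarith [sq_nonneg (2 * r - 7)])
    have h₂ : 0 ≤ 181 * r ^ 2 - 237 * r + 98 := by nlinarith [sq_nonneg (3 * r - 2)]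
    have h₃ : 0 ≤ p * (160 * p ^ 2 - 16 * r ^ 2 * p + 6 * r ^ 4 - 68 * r ^ 3 + 360 * r ^ 2 -
        16 * r + 62) := by
      refine mul_nonneg hp ?_
      nlinarith [sq_nonneg (20 * p - r ^ 2), sq_nonneg (r ^ 2 - 6 * r), sq_nonneg (r - 1)]
    have h₄ : 0 ≤ 124 * p ^ 2 + 328 * r * p ^ 2 := by positivity
    linarith

-- The same numerator for `le_normalizedStep_zero_excess`.
theorem excess_step_zero_numerator_nonneg {p l : ℝ} (hp : 0 ≤ p) (hl : 0 ≤ l) :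
    0 ≤ (21 * p ^ 5 - 85 * p ^ 4 * l + 40 * p ^ 3 * l ^ 2 + 240 * p ^ 2 * l ^ 3 -
        45 * p * l ^ 4 + 21 * l ^ 5) +
      (229 * p ^ 4 - 684 * p ^ 3 * l + 234 * p ^ 2 * l ^ 2 + 916 * p * l ^ 3 - 111 * l ^ 4) +
      (1201 * p ^ 3 - 1677 * p ^ 2 * l + 523 * p * l ^ 2 + 1241 * l ^ 3) +
      (2751 * p ^ 2 - 1908 * p * l - 329 * l ^ 2) + (2630 * p - 830 * l) + 872 := by
  rcases le_total l p with h | h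
  · obtain ⟨r, hr, rfl⟩ : ∃ r, 0 ≤ r ∧ p = l + r := ⟨p - l, by linarith, by ring⟩
    have h₁ : 0 ≤ r * l * (248 * l ^ 2 - 444 * r * l + 232 * r ^ 2) :=
      mul_nonneg (by positivity) (by nlinarith [sq_nonneg (l - r)])
    have h₂ : 0 ≤ r * l * (320 * l ^ 3 + 60 * r * l ^ 2 - 90 * r ^ 2 * l + 20 * r ^ 3) := by
      refine mul_nonneg (by positivity) ?_
      nlinarith [mul_nonneg hl (sq_nonneg (r - 4 * l)), mul_nonneg hr (sq_nonneg (r - 3 * l)),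
        mul_nonneg hl (sq_nonneg (r - 3 * l)), mul_nonneg hr (sq_nonneg (r - 4 * l))]
    have h₃ : 0 ≤ 872 + 1800 * l + 2630 * r + 514 * l ^ 2 + 3594 * r * l + 2751 * r ^ 2 +
      1288 * l ^ 3 + 772 * r * l ^ 2 + 1926 * r ^ 2 * l + 1201 * r ^ 3 + 584 * l ^ 4 +
      229 * r ^ 4 + 192 * l ^ 5 + 21 * r ^ 5 := by positivity
    linarith
  · obtain ⟨r, hr, rfl⟩ : ∃ r, 0 ≤ r ∧ l = p + r := ⟨l - p, by linarith, by ring⟩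
    have h₁ : 0 ≤ r ^ 3 * (21 * r ^ 2 - 111 * r + 148) :=
      mul_nonneg (by positivity) (by nlinarith [sq_nonneg (42 * r - 111)])
    have h₂ : 0 ≤ 1093 * r ^ 3 - 329 * r ^ 2 - 830 * r + 872 := by
      nlinarith [mul_nonneg hr (sq_nonneg (r - 1)), sq_nonneg (3 * r - 2)]
    have h₃ : 0 ≤ p * (4246 * r ^ 2 - 2566 * r + 1800) :=
      mul_nonneg hp (by nlinarith [sq_nonneg (3 * r - 1)])
    have h₄ : 0 ≤ 514 * p ^ 2 + 3092 * r * p ^ 2 + 1288 * p ^ 3 + 60 * r ^ 4 * p +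
      472 * r ^ 3 * p + 2316 * r ^ 2 * p ^ 2 + 2088 * r * p ^ 3 + 584 * p ^ 4 +
      270 * r ^ 3 * p ^ 2 + 700 * r ^ 2 * p ^ 3 + 640 * r * p ^ 4 + 192 * p ^ 5 := by positivity
    linarith

theorem excess_le_normalizedStep_one (hj : 2 ≤ j) (hjn : j ≤ n + 1) :
    excess (n + 1) j ≤ normalizedStep 1 n j (excess n j) (excess n (j - 2)) +
      4 * normalizedStep 0 n j 1 1 - 3 := by
  obtain ⟨p, rfl⟩ : ∃ p, j = p + 2 := ⟨j - 2, by ring⟩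
  obtain ⟨l, rfl⟩ : ∃ l, n = p + l + 1 := ⟨n - p - 1, by ring⟩
  have hp : 0 ≤ p := by linarith
  have hl : 0 ≤ l := by linarith
  have hden : 0 ≤ 6 * (p + l + 1) ^ 2 * (p + l + 2) ^ 2 * (p + l + 3) := by positivity
  rw [← sub_nonneg]
  refine (div_nonneg (excess_step_one_numerator_nonneg hp hl) hden).trans_eq ?_
  simp only [normalizedStep, excess]
  field_simp
  ring

-- The constant `43 / 20` is what is needed for `-9 + 4 * (43 / 20) = -2 / 5`, the coefficient of
-- `t ^ 2` in `one_add_mul_exp_neg_le`; the latter fails for a slightly larger multiple of `t ^ 2`.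
theorem le_normalizedStep_zero_excess (hj : 2 ≤ j) (hjn : j ≤ n + 1) :
    43 / 20 ≤ normalizedStep 0 n j (3 + (excess n j - excess (n + 1) j))
      (3 + (excess n (j - 2) - excess (n + 1) j)) := by
  obtain ⟨p, rfl⟩ : ∃ p, j = p + 2 := ⟨j - 2, by ring⟩
  obtain ⟨l, rfl⟩ : ∃ l, n = p + l + 1 := ⟨n - p - 1, by ring⟩
  have hp : 0 ≤ p := by linarith
  have hl : 0 ≤ l := by linarith
  have hden : 0 ≤ 60 * (p + l + 1) ^ 2 * (p + l + 2) ^ 2 * (p + l + 3) := by positivity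
  rw [← sub_nonneg]
  refine (div_nonneg (excess_step_zero_numerator_nonneg hp hl) hden).trans_eq ?_
  simp only [normalizedStep, excess]
  field_simp
  ring

end Excess

section LowerBound

theorem one_add_mul_exp_neg_le {t : ℝ} (ht₀ : 0 ≤ t) (ht : t ≤ 1 / 3) :
    (1 + t) * Real.exp (-t) ≤ 1 - 2 / 5 * t ^ 2 := by
  have hexp : 1 + t + t ^ 2 / 2 + t ^ 3 / 6 + t ^ 4 / 24 ≤ Real.exp t := by
    refine (Real.sum_le_exp_of_nonneg ht₀ 5).trans_eq' ?_
    simp [Finset.sum_range_succ, Nat.factorial]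
  have hpos : 0 ≤ 1 - 2 / 5 * t ^ 2 := by nlinarith
  have hpoly : 1 + t ≤ (1 - 2 / 5 * t ^ 2) * (1 + t + t ^ 2 / 2 + t ^ 3 / 6 + t ^ 4 / 24) := by
    have hcubic : 0 ≤ 1 / 10 - 7 / 30 * t - 19 / 120 * t ^ 2 - t ^ 3 / 15 - t ^ 4 / 60 := by
      have h₂ : t ^ 2 ≤ (1 / 3) ^ 2 := by gcongr
      have h₃ : t ^ 3 ≤ (1 / 3) ^ 3 := by gcongr
      have h₄ : t ^ 4 ≤ (1 / 3) ^ 4 := by gcongr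
      linarith
    linarith [mul_nonneg (sq_nonneg t) hcubic]
  rw [Real.exp_neg, ← div_eq_mul_inv, div_le_iff₀ (Real.exp_pos t)]
  exact hpoly.trans (mul_le_mul_of_nonneg_left hexp hpos)

variable {α t n j : ℝ}

theorem le_one_add_mul_normalizedStep_excess (ht₀ : 0 ≤ t) (ht : t ≤ 1 / 3)
    (hαt : α * (1 + t) = 1 - 3 * t) (hj : 2 ≤ j) (hjn : j ≤ n + 1) :
    1 - 2 / 5 * t ^ 2 ≤
      (1 + t) * normalizedStep α n j (1 + t * (excess n j - excess (n + 1) j))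
        (1 + t * (excess n (j - 2) - excess (n + 1) j)) := by
  have hone : normalizedStep 1 n j 1 1 = 1 := normalizedStep_one_one_one (by linarith)
  have h₁ := mul_le_mul_of_nonneg_left (excess_le_normalizedStep_one hj hjn)
    (mul_nonneg (sub_nonneg.2 (show 3 * t ≤ 1 by linarith)) ht₀)
  have h₀ := mul_le_mul_of_nonneg_left (le_normalizedStep_zero_excess hj hjn)
    (show 0 ≤ 4 * t ^ 2 by positivity)
  generalize excess (n + 1) j = x at *
  generalize excess n j = y at *
  generalize excess n (j - 2) = z at *
  have hsplit₁ : normalizedStep 1 n j (1 + t * (y - x)) (1 + t * (z - x)) =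
      1 + t * (normalizedStep 1 n j y z - x) := by
    unfold normalizedStep at hone ⊢
    linear_combination (1 - t * x) * hone
  have hsplit₀ : normalizedStep 0 n j (1 + t * (y - x)) (1 + t * (z - x)) =
      (1 - 3 * t) * normalizedStep 0 n j 1 1 +
        t * normalizedStep 0 n j (3 + (y - x)) (3 + (z - x)) := by
    unfold normalizedStep
    ring
  calc 1 - 2 / 5 * t ^ 2
      ≤ (1 - 3 * t) * (1 + t * (normalizedStep 1 n j y z - x)) +
          4 * t * ((1 - 3 * t) * normalizedStep 0 n j 1 1 +
            t * normalizedStep 0 n j (3 + (y - x)) (3 + (z - x))) := by linarith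
    _ = (1 + t) * normalizedStep α n j (1 + t * (y - x)) (1 + t * (z - x)) := by
      rw [normalizedStep_eq_interpolation α, hsplit₁, hsplit₀]
      linear_combination ((1 - 3 * t) * normalizedStep 0 n j 1 1 +
        t * normalizedStep 0 n j (3 + (y - x)) (3 + (z - x)) -
        (1 + t * (normalizedStep 1 n j y z - x))) * hαt

theorem exp_excess_le_normalizedStep (hα : 0 ≤ α) (ht₀ : 0 ≤ t)
    (hαt : α * (1 + t) = 1 - 3 * t) (hj : 2 ≤ j) (hjn : j ≤ n + 1) :
    Real.exp (t * (excess (n + 1) j - (n + 1))) ≤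
      normalizedStep α n j (Real.exp (t * (excess n j - n)))
        (Real.exp (t * (excess n (j - 2) - n))) := by
  have ht : t ≤ 1 / 3 := by linarith [mul_nonneg hα (show 0 ≤ 1 + t by linarith)]
  have hfactor (y : ℝ) : Real.exp (t * (y - n)) =
      Real.exp (t * (excess (n + 1) j - n)) * Real.exp (t * (y - excess (n + 1) j)) := by
    rw [← Real.exp_add]
    ring_nf
  have hbound : Real.exp (-t) ≤
      normalizedStep α n j (Real.exp (t * (excess n j - excess (n + 1) j)))
        (Real.exp (t * (excess n (j - 2) - excess (n + 1) j))) := by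
    have hexp (y : ℝ) : 1 + y ≤ Real.exp y := by linarith [Real.add_one_le_exp y]
    refine le_of_mul_le_mul_left ?_ (show 0 < 1 + t by linarith)
    calc (1 + t) * Real.exp (-t) ≤ 1 - 2 / 5 * t ^ 2 := one_add_mul_exp_neg_le ht₀ ht
      _ ≤ _ := le_one_add_mul_normalizedStep_excess ht₀ ht hαt hj hjn
      _ ≤ _ := mul_le_mul_of_nonneg_left
        (normalizedStep_mono hα (by linarith) hjn (hexp _) (hexp _)) (by linarith)
  rw [hfactor (excess n j), hfactor (excess n (j - 2)), ← mul_normalizedStep]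
  calc Real.exp (t * (excess (n + 1) j - (n + 1)))
      = Real.exp (t * (excess (n + 1) j - n)) * Real.exp (-t) := by
        rw [← Real.exp_add]
        ring_nf
    _ ≤ _ := mul_le_mul_of_nonneg_left hbound (Real.exp_pos _).le

theorem choose_mul_pow_mul_exp_excess_le_elephantCoeff (hα : 0 ≤ α) (ht₀ : 0 ≤ t)
    (hαt : α * (1 + t) = 1 - 3 * t) {n : ℕ} (hn : 2 ≤ n) (k : ℕ) :
    n.choose (2 * k) * α ^ k * Real.exp (t * (excess n (2 * k) - n)) ≤
      elephantCoeff α n k := by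
  refine choose_mul_pow_mul_le_elephantCoeff hα
    (f := fun n k => Real.exp (t * (excess n (2 * k) - n))) (fun n hn => ?_) ?_
    (fun n k _ hk => ?_) hn k
  · rw [Nat.cast_zero, mul_zero, Real.exp_le_one_iff]
    exact mul_nonpos_of_nonneg_of_nonpos ht₀
      (sub_nonpos.2 (excess_zero_right_le (by exact_mod_cast hn)))
  · rw [Real.exp_le_one_iff]
    exact mul_nonpos_of_nonneg_of_nonpos ht₀ (by norm_num [excess])
  · have hprev : (2 * (k + 1) : ℝ) - 2 = 2 * k := by ring
    have h := exp_excess_le_normalizedStep (n := n) (j := 2 * (k + 1)) hα ht₀ hαt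
      (by linarith [Nat.cast_nonneg (α := ℝ) k]) (by exact_mod_cast hk)
    rw [hprev] at h
    exact_mod_cast h

theorem exp_mul_choose_mul_pow_le_elephantCoeff (hα₀ : 0 ≤ α) (hα₁ : α ≤ 1) (n k : ℕ) :
    Real.exp (-((1 - α) * n) / (3 + α)) * n.choose (2 * k) * α ^ k ≤ elephantCoeff α n k := by
  have ht₀ : 0 ≤ (1 - α) / (3 + α) := div_nonneg (by linarith) (by linarith)
  have hαt : α * (1 + (1 - α) / (3 + α)) = 1 - 3 * ((1 - α) / (3 + α)) := by
    field_simp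
    ring
  have hexponent : -((1 - α) * n) / (3 + α) = -((1 - α) / (3 + α) * n) := by ring
  rw [hexponent]
  generalize (1 - α) / (3 + α) = t at ht₀ hαt
  rcases Nat.lt_or_ge n (2 * k) with hk | hk
  · simp [elephantCoeff_eq_zero_of_lt hk, Nat.choose_eq_zero_of_lt hk]
  rcases Nat.lt_or_ge n 2 with hn | hn
  · obtain rfl : k = 0 := by omega
    simpa using mul_nonneg ht₀ n.cast_nonneg
  calc Real.exp (-(t * n)) * n.choose (2 * k) * α ^ k
      = n.choose (2 * k) * α ^ k * Real.exp (t * (0 - n)) := by ring_nf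
    _ ≤ n.choose (2 * k) * α ^ k * Real.exp (t * (excess n (2 * k) - n)) := by
      gcongr
      exact excess_nonneg (by exact_mod_cast hn) (by positivity) (by exact_mod_cast hk)
    _ ≤ elephantCoeff α n k :=
      choose_mul_pow_mul_exp_excess_le_elephantCoeff hα₀ ht₀ hαt hn k

end LowerBound

/-- **Expansion of the elephant polynomials in the basis `x^{n-2k} (1-x²)^k`.**
For `α ∈ [0,1]` and `n ≥ 1` there are unique coefficients `λ_{n,k}`,
`k = 0, 1, …, ⌊n/2⌋`, with
`R_n(x) = Σ_{k=0}^{⌊n/2⌋} (-1)^k λ_{n,k} x^{n-2k} (1-x²)^k`; they are non-negative and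
satisfy `e^{-(1-α)n/(3+α)} C(n, 2k) α^k ≤ λ_{n,k} ≤ C(n, 2k) α^k`. -/
theorem elephantPoly_basis_coeffs (α : ℝ) (hα : α ∈ Set.Icc (0 : ℝ) 1)
    (n : ℕ) (hn : 1 ≤ n) :
    ∃ lam : ℕ → ℝ,
      ((∀ k : ℕ, n / 2 < k → lam k = 0) ∧
        (∀ x : ℝ, (elephantPoly α n).eval x
          = ∑ k ∈ Finset.range (n / 2 + 1),
              (-1 : ℝ) ^ k * lam k * x ^ (n - 2 * k) * (1 - x ^ 2) ^ k)) ∧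
      (∀ lam' : ℕ → ℝ,
        ((∀ k : ℕ, n / 2 < k → lam' k = 0) ∧
          (∀ x : ℝ, (elephantPoly α n).eval x
            = ∑ k ∈ Finset.range (n / 2 + 1),
                (-1 : ℝ) ^ k * lam' k * x ^ (n - 2 * k) * (1 - x ^ 2) ^ k)) →
        lam' = lam) ∧
      (∀ k : ℕ, k ≤ n / 2 →
        0 ≤ lam k ∧
        Real.exp (-((1 - α) * n) / (3 + α)) * (n.choose (2 * k)) * α ^ k ≤ lam k ∧
        lam k ≤ (n.choose (2 * k)) * α ^ k) := by
  have hlower := exp_mul_choose_mul_pow_le_elephantCoeff hα.1 hα.2 n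
  refine ⟨elephantCoeff α n, ⟨fun k hk => elephantCoeff_eq_zero_of_lt (by omega),
    eval_elephantPoly α n⟩, fun lam' ⟨htail, heval⟩ => ?_, fun k _ =>
    ⟨le_trans (mul_nonneg (by positivity) (pow_nonneg hα.1 k)) (hlower k), hlower k,
      elephantCoeff_le_choose_mul_pow hα.1 hα.2 n k⟩⟩
  funext k
  rcases Nat.lt_or_ge (n / 2) k with hk | hk
  · rw [htail k hk, elephantCoeff_eq_zero_of_lt (by omega)]
  · have hsigned : (-1) ^ k * lam' k = (-1) ^ k * elephantCoeff α n k :=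
      coeff_eq_of_sum_mul_pow_mul_pow_eq
        (fun x => (heval x).symm.trans (eval_elephantPoly α n x)) hk
    exact mul_left_cancel₀ (pow_ne_zero k (by norm_num)) hsigned
end

section
/- Let α ∈ [0,1), let 𝔽_n be the percolated random recursive forest with percolation parameter α, and let (R_n)_{n≥1} be the elephant polynomials with parameter α. Then for every n ≥ 1, iⁿ·R_n(0) = ℙ(every connected component (cluster) of 𝔽_n has even size). In particular, R_n(0) = 0 when n is odd. -/
open MeasureTheory ProbabilityTheory Filter Polynomial
open scoped ENNReal NNReal

namespace RRF

variable {Ω : Type*} [MeasurableSpace Ω]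

/-- The family combining `(ξ_n)` and `(u_n)`, with values in `Bool ⊕ ℕ`. -/
def fam (ξ : ℕ → Ω → Bool) (u : ℕ → Ω → ℕ) : (ℕ ⊕ ℕ) → Ω → (Bool ⊕ ℕ)
  | .inl n => fun ω => .inl (ξ n ω)
  | .inr n => fun ω => .inr (u n ω)

/-- The driving randomness of the percolated random recursive forest with percolation
parameter `α`: `(ξ_n)_{n ≥ 2}` are i.i.d. Bernoulli(α) (an edge `(n, u_n)` is kept iff
`ξ_n = 1`), `(u_n)_{n ≥ 2}` are independent with `u_n` uniform on `{1, …, n-1}`, and the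
two families are jointly independent. -/
structure IsForestDriving (P : Measure Ω) (α : ℝ)
    (ξ : ℕ → Ω → Bool) (u : ℕ → Ω → ℕ) : Prop where
  meas_ξ : ∀ n, Measurable (ξ n)
  meas_u : ∀ n, Measurable (u n)
  ξ_law : ∀ n, 2 ≤ n → P {ω | ξ n ω = true} = ENNReal.ofReal α
  u_range : ∀ n, 2 ≤ n → ∀ ω, 1 ≤ u n ω ∧ u n ω < n
  u_law : ∀ n, 2 ≤ n → ∀ k, 1 ≤ k → k < n → P {ω | u n ω = k} = ((n - 1 : ℕ) : ℝ≥0∞)⁻¹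
  indep : iIndepFun (fam ξ u) P


/-- The root of the cluster containing the vertex `j` in the percolated random recursive
forest: climb the retained parent edges `j ↦ u_j` (an edge is retained iff `ξ_j = 1`)
until reaching a vertex with no retained parent edge.  (The value `u_j` is clamped to
`j - 1`; this is irrelevant since `1 ≤ u_j < j` holds surely.) -/
noncomputable def rootOf (ξ : ℕ → Ω → Bool) (u : ℕ → Ω → ℕ) (ω : Ω) : ℕ → ℕ
  | 0 => 0
  | 1 => 1
  | j + 2 =>
      if ξ (j + 2) ω then rootOf ξ u ω (min (u (j + 2) ω) (j + 1)) else j + 2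
  termination_by j => j
  decreasing_by exact Nat.lt_succ_of_le (min_le_right _ _)

/-- Every connected component (cluster) of the forest `𝔽_n` has even size. -/
def AllClustersEven (ξ : ℕ → Ω → Bool) (u : ℕ → Ω → ℕ) (n : ℕ) (ω : Ω) : Prop :=
  ∀ j : ℕ, 1 ≤ j → j ≤ n →
    Even (Set.ncard {i : ℕ | 1 ≤ i ∧ i ≤ n ∧ rootOf ξ u ω i = rootOf ξ u ω j})

end RRF

open RRF

/-!
Give a cluster of size `m` the weight `T_m`, the Chebyshev polynomial. The product of the weights
of the clusters of `𝔽_n` has expectation `R_n`: the vertex `n + 1` starts a cluster of its own with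
probability `1 - α`, which multiplies the product by `T_1 = x`, and otherwise joins the cluster of a
uniform vertex, so that a cluster of size `m` grows with probability `α m / n`. As
`m T_{m+1} = m x T_m - (1 - x²) T_m'`, the Leibniz rule turns the sum over the clusters into
`n x - (1 - x²) d/dx` applied to the product, which gives the recursion of `R_n`. At `x = 0` the
factor `iᵐ T_m(0)` is `1` for even `m` and `0` for odd `m`.
-/

namespace RRF

open Polynomial.Chebyshev Finsupp

section ChebyshevProd

variable {R κ ι : Type*} [CommRing R]

lemma intCast_mul_T_add_one (m : ℤ) :
    (m : R[X]) * T R (m + 1) = (m : R[X]) * (X * T R m) - (1 - X ^ 2) * derivative (T R m) := by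
  have hT : T R (m + 1) = X * T R m - (1 - X ^ 2) * U R (m - 1) := by
    convert T_eq_X_mul_T_sub_pol_U R (m - 1) using 2 <;> ring_nf
  rw [hT, T_derivative_eq_U]
  ring

variable (R) in
/-- The product of the Chebyshev polynomials `T_{c r}` over the labels `r`, where `c r` is the
size of the cluster labelled `r`. Labels outside the support of `c` contribute `T_0 = 1`. -/
noncomputable def chebyshevProd (c : κ →₀ ℕ) : R[X] :=
  c.prod fun _ m => T R m

lemma T_mul_chebyshevProd_erase (c : κ →₀ ℕ) (r : κ) :
    T R (c r) * chebyshevProd R (c.erase r) = chebyshevProd R c :=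
  mul_prod_erase' c r (fun _ m => T R (m : ℤ)) (by simp)

lemma chebyshevProd_add_single (c : κ →₀ ℕ) (r : κ) :
    chebyshevProd R (c + single r 1) = T R (c r + 1) * chebyshevProd R (c.erase r) := by
  simp [← T_mul_chebyshevProd_erase (c + single r 1) r, erase_add]

lemma chebyshevProd_add_single_of_eq_zero {c : κ →₀ ℕ} {r : κ} (hr : c r = 0) :
    chebyshevProd R (c + single r 1) = X * chebyshevProd R c := by
  simp [chebyshevProd_add_single, hr, erase_of_notMem_support]

lemma derivative_chebyshevProd (c : κ →₀ ℕ) :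
    derivative (chebyshevProd R c) =
      c.sum fun r m => derivative (T R m) * chebyshevProd R (c.erase r) := by
  classical
  simp only [chebyshevProd, Finsupp.prod, derivative_prod_finset, Finsupp.support_erase]
  refine Finset.sum_congr rfl fun r _ => ?_
  rw [mul_comm]
  congr 1
  exact Finset.prod_congr rfl fun s hs => by rw [Finsupp.erase_ne (Finset.ne_of_mem_erase hs)]

lemma sum_nsmul_chebyshevProd_add_single (c : κ →₀ ℕ) :
    (c.sum fun r m => m • chebyshevProd R (c + single r 1)) =
      c.degree • (X * chebyshevProd R c) - (1 - X ^ 2) * derivative (chebyshevProd R c) := by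
  rw [derivative_chebyshevProd, degree_apply, Finset.sum_smul, Finsupp.sum, Finsupp.sum,
    Finset.mul_sum, ← Finset.sum_sub_distrib]
  refine Finset.sum_congr rfl fun r _ => ?_
  rw [chebyshevProd_add_single, ← T_mul_chebyshevProd_erase c r]
  have h := intCast_mul_T_add_one (R := R) (c r)
  push_cast at h
  simp only [nsmul_eq_mul]
  linear_combination chebyshevProd R (c.erase r) * h

lemma I_pow_mul_eval_zero_T (m : ℕ) :
    Complex.I ^ m * ((T ℝ m).eval 0 : ℝ) = if Even m then 1 else 0 := by
  split_ifs with hm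
  · obtain ⟨k, rfl⟩ := hm.two_dvd
    rw [pow_mul, Complex.I_sq, Nat.cast_mul, Nat.cast_two, T_eval_two_mul_zero, Int.negOnePow_def]
    simp [← mul_pow]
  · rw [T_eval_zero_of_odd ℝ (by exact_mod_cast Nat.not_even_iff_odd.mp hm)]
    simp

open Classical in
lemma I_pow_degree_mul_eval_zero_chebyshevProd (c : κ →₀ ℕ) :
    Complex.I ^ c.degree * ((chebyshevProd ℝ c).eval 0 : ℝ) =
      if ∀ r, Even (c r) then 1 else 0 := by
  have hsupport : (∀ r ∈ c.support, Even (c r)) ↔ ∀ r, Even (c r) :=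
    forall_congr' fun r => by by_cases hr : c r = 0 <;> simp [hr]
  rw [degree_apply, ← Finset.prod_pow_eq_pow_sum, chebyshevProd, Finsupp.prod, eval_prod,
    Complex.ofReal_prod, ← Finset.prod_mul_distrib]
  simp only [I_pow_mul_eval_zero_T, Finset.prod_ite_zero, Finset.prod_const_one, hsupport]

variable [Fintype ι]

/-- The sizes of the fibres of `v`, as a function of the value. For the map `v` sending a vertex
to the root of its cluster these are the cluster sizes. -/
noncomputable def fiberSizes (v : ι → κ) : κ →₀ ℕ :=
  ∑ i, single (v i) 1

lemma fiberSizes_apply (v : ι → κ) (r : κ) : fiberSizes v r = {i | v i = r}.ncard := by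
  classical
  simp [fiberSizes, single_apply, Set.ncard_eq_toFinset_card']

lemma degree_fiberSizes (v : ι → κ) : (fiberSizes v).degree = Fintype.card ι := by
  simp [fiberSizes]

lemma even_fiberSizes_iff (v : ι → κ) :
    (∀ r, Even (fiberSizes v r)) ↔ ∀ i, Even {j | v j = v i}.ncard := by
  simp only [fiberSizes_apply]
  refine ⟨fun h i => h (v i), fun h r => ?_⟩
  by_cases hr : ∃ i, v i = r
  · obtain ⟨i, rfl⟩ := hr
    exact h i
  · simp [not_exists.mp hr]

lemma fiberSizes_fin_succ {n : ℕ} (v : Fin (n + 1) → κ) :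
    fiberSizes v = fiberSizes (fun i : Fin n => v i.castSucc) + single (v (Fin.last n)) 1 :=
  Fin.sum_univ_castSucc _

lemma sum_chebyshevProd_fiberSizes_add_single (v : ι → κ) :
    ∑ i, chebyshevProd R (fiberSizes v + single (v i) 1) =
      Fintype.card ι • (X * chebyshevProd R (fiberSizes v)) -
        (1 - X ^ 2) * derivative (chebyshevProd R (fiberSizes v)) := by
  rw [← degree_fiberSizes v, ← sum_nsmul_chebyshevProd_add_single, fiberSizes,
    ← Finsupp.sum_finsetSum_index (by simp) (by simp [add_smul])]
  simp

end ChebyshevProd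

section ElephantPoly

variable (α : ℝ) (n : ℕ)

/-- The operator `p ↦ x p - (α / n) (1 - x²) p'` which takes the elephant polynomial `R_n` to
`R_{n+1}`. -/
noncomputable def elephantStep : ℝ[X] →ₗ[ℝ] ℝ[X] :=
  LinearMap.mulLeft ℝ X - (α / n) • LinearMap.mulLeft ℝ (1 - X ^ 2) ∘ₗ derivative

lemma elephantStep_apply (p : ℝ[X]) :
    elephantStep α n p = X * p - (α / n) • ((1 - X ^ 2) * derivative p) :=
  rfl

lemma elephantPoly_succ : elephantPoly α (n + 1) = elephantStep α n (elephantPoly α n) := by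
  cases n with
  | zero => simp [elephantPoly, elephantStep_apply]
  | succ n => simp [elephantPoly, elephantStep_apply, smul_eq_C_mul]

lemma elephantPoly_comp_neg_X :
    (elephantPoly α n).comp (-X) = (-1 : ℝ) ^ n • elephantPoly α n := by
  induction n with
  | zero => simp [elephantPoly]
  | succ n ih =>
    have hderiv : (derivative (elephantPoly α n)).comp (-X) =
        -((-1 : ℝ) ^ n • derivative (elephantPoly α n)) := by
      rw [← derivative_smul, ← ih, derivative_comp]
      simp
    simp only [elephantPoly_succ, elephantStep_apply, sub_comp, mul_comp, smul_comp, X_comp,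
      one_comp, pow_comp, ih, hderiv, neg_sq, pow_succ (-1 : ℝ), mul_neg, neg_mul, mul_smul_comm]
    module

lemma eval_zero_elephantPoly_of_odd {n : ℕ} (hn : Odd n) : (elephantPoly α n).eval 0 = 0 := by
  have h : (elephantPoly α n).eval 0 = -(elephantPoly α n).eval 0 := by
    simpa [hn.neg_one_pow] using congrArg (eval 0) (elephantPoly_comp_neg_X α n)
  exact self_eq_neg.mp h

lemma elephantStep_chebyshevProd_fiberSizes {κ : Type*} {n : ℕ} (hn : 1 ≤ n) (v : Fin n → κ) :
    elephantStep α n (chebyshevProd ℝ (fiberSizes v)) =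
      (1 - α) • (X * chebyshevProd ℝ (fiberSizes v)) +
        (α / n) • ∑ i, chebyshevProd ℝ (fiberSizes v + single (v i) 1) := by
  have hn' : (n : ℝ) ≠ 0 := by positivity
  have hα : (α / n) * n = α := div_mul_cancel₀ α hn'
  rw [elephantStep_apply, sum_chebyshevProd_fiberSizes_add_single, Fintype.card_fin, smul_sub,
    ← Nat.cast_smul_eq_nsmul ℝ, smul_smul, hα]
  module

end ElephantPoly

section Independence

variable {Ω κ E F : Type*} {mΩ : MeasurableSpace Ω} {P : Measure Ω}
  [Fintype κ] [MeasurableSpace κ] [MeasurableSingletonClass κ]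
  [MeasurableSpace E] [NormedAddCommGroup F] [NormedSpace ℝ F]

lemma integral_eq_sum_measureReal_smul_of_indepFun {X : Ω → κ} {Y : Ω → E} (hX : Measurable X)
    (hY : AEMeasurable Y P) (hXY : X ⟂ᵢ[P] Y) {f : κ → E → F}
    (hf : ∀ k, Integrable (f k) (P.map Y)) :
    ∫ ω, f (X ω) (Y ω) ∂P = ∑ k, P.real (X ⁻¹' {k}) • ∫ ω, f k (Y ω) ∂P := by
  have hfiber (k : κ) : MeasurableSet (X ⁻¹' {k}) := hX (measurableSet_singleton k)
  have hcongr (k : κ) :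
      Set.EqOn (fun ω => f k (Y ω)) (fun ω => f (X ω) (Y ω)) (X ⁻¹' {k}) := by
    rintro ω rfl
    rfl
  have hintegrable (k : κ) : IntegrableOn (fun ω => f (X ω) (Y ω)) (X ⁻¹' {k}) P :=
    ((hf k).comp_aemeasurable hY).integrableOn.congr_fun (hcongr k) (hfiber k)
  have hcover : ⋃ k, X ⁻¹' {k} = Set.univ := by
    rw [← Set.preimage_iUnion, Set.iUnion_of_singleton, Set.preimage_univ]
  rw [← setIntegral_univ, ← hcover,
    integral_iUnion_fintype hfiber (pairwise_disjoint_fiber X) hintegrable]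
  refine Finset.sum_congr rfl fun k _ => ?_
  rw [← setIntegral_congr_fun (hfiber k) (hcongr k)]
  exact Indep.setIntegral_eq_smul hX.comap_le hXY hY ⟨{k}, measurableSet_singleton k, rfl⟩
    (hf k).aestronglyMeasurable

end Independence

section Forest

variable {Ω : Type*} {ξ : ℕ → Ω → Bool} {u : ℕ → Ω → ℕ} {n : ℕ}

lemma rootOf_le (ω : Ω) (j : ℕ) : rootOf ξ u ω j ≤ j := by
  induction j using Nat.strong_induction_on with
  | _ j ih =>
    match j with
    | 0 | 1 => simp [rootOf]
    | j + 2 =>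
      rw [rootOf]
      split_ifs
      · exact (ih _ (by omega)).trans (by omega)
      · exact le_rfl

lemma measurable_rootOf {m : MeasurableSpace Ω} {j : ℕ} (hξ : ∀ i ≤ j, Measurable[m] (ξ i))
    (hu : ∀ i ≤ j, Measurable[m] (u i)) : Measurable[m] fun ω => rootOf ξ u ω j := by
  induction j using Nat.strong_induction_on with
  | _ j ih =>
    match j with
    | 0 | 1 => simp [rootOf]
    | j + 2 =>
      have hclimb : Measurable fun q : Ω × ℕ => rootOf ξ u q.1 (min q.2 (j + 1)) :=
        measurable_from_prod_countable_left fun k =>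
          have hk : min k (j + 1) < j + 2 := by omega
          ih _ hk (fun i hi => hξ i (hi.trans hk.le)) fun i hi => hu i (hi.trans hk.le)
      simp only [rootOf]
      exact Measurable.ite (hξ _ le_rfl (measurableSet_singleton true))
        (hclimb.comp (measurable_id.prodMk (hu _ le_rfl))) measurable_const

/-- The roots of the clusters of the vertices `1, …, n` of `𝔽_n`; the vertex `i + 1` is indexed
by `i : Fin n`. -/
noncomputable def clusterRoots (ξ : ℕ → Ω → Bool) (u : ℕ → Ω → ℕ) (n : ℕ) (ω : Ω) : Fin n → ℕ :=
  fun i => rootOf ξ u ω (i + 1)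

/-- The parent of the vertex `n + 1` in `𝔽_{n+1}`, or `0` if its parent edge is deleted. The
clamping of `u_{n+1}` to `n` agrees with the one in `rootOf`. -/
def retainedParent (ξ : ℕ → Ω → Bool) (u : ℕ → Ω → ℕ) (n : ℕ) (ω : Ω) : Fin (n + 1) :=
  if ξ (n + 1) ω then ⟨min (u (n + 1) ω) n, by omega⟩ else 0

lemma retainedParent_eq_zero_iff {ω : Ω} (hn : 1 ≤ n) (hu : 1 ≤ u (n + 1) ω) :
    retainedParent ξ u n ω = 0 ↔ ¬ξ (n + 1) ω := by
  have hmin : min (u (n + 1) ω) n ≠ 0 := by omega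
  by_cases h : ξ (n + 1) ω
  · simpa [retainedParent, h, Fin.ext_iff] using hmin
  · simp [retainedParent, h]

lemma retainedParent_eq_succ_iff {ω : Ω} {i : Fin n} (hu : u (n + 1) ω ≤ n) :
    retainedParent ξ u n ω = i.succ ↔ ξ (n + 1) ω ∧ u (n + 1) ω = i + 1 := by
  by_cases h : ξ (n + 1) ω <;> simp [retainedParent, h, Fin.ext_iff, hu]

/-- The polynomial `∏ T_{|c|}`, where `c` runs over the clusters of `𝔽_n`. -/
noncomputable def clusterPoly (ξ : ℕ → Ω → Bool) (u : ℕ → Ω → ℕ) (n : ℕ) (ω : Ω) : ℝ[X] :=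
  chebyshevProd ℝ (fiberSizes (clusterRoots ξ u n ω))

lemma allClustersEven_iff (ω : Ω) :
    AllClustersEven ξ u n ω ↔ ∀ r, Even (fiberSizes (clusterRoots ξ u n ω) r) := by
  have hcard (r : ℕ) : {i | 1 ≤ i ∧ i ≤ n ∧ rootOf ξ u ω i = r}.ncard =
      {i | clusterRoots ξ u n ω i = r}.ncard := by
    rw [← Set.ncard_image_of_injective {i | clusterRoots ξ u n ω i = r}
      (f := fun i : Fin n => (i : ℕ) + 1) fun i j h => by simpa [Fin.ext_iff] using h]
    congr 1
    ext i
    constructor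
    · rintro ⟨h1, hn, hr⟩
      exact ⟨⟨i - 1, by omega⟩, by simpa [clusterRoots, Nat.sub_add_cancel h1] using hr,
        Nat.sub_add_cancel h1⟩
    · rintro ⟨i, hr, rfl⟩
      exact ⟨Nat.succ_pos _, i.isLt, hr⟩
  simp only [even_fiberSizes_iff, AllClustersEven, hcard]
  refine ⟨fun h i => h (i + 1) (by omega) i.isLt, fun h j h1 hn => ?_⟩
  simpa [clusterRoots, Nat.sub_add_cancel h1] using h ⟨j - 1, by omega⟩

lemma I_pow_mul_eval_zero_clusterPoly (ω : Ω) :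
    Complex.I ^ n * ((clusterPoly ξ u n ω).eval 0 : ℝ) =
      {ω | AllClustersEven ξ u n ω}.indicator (fun _ => (1 : ℂ)) ω := by
  classical
  have h := I_pow_degree_mul_eval_zero_chebyshevProd (fiberSizes (clusterRoots ξ u n ω))
  rw [degree_fiberSizes, Fintype.card_fin] at h
  simp [clusterPoly, h, Set.indicator_apply, allClustersEven_iff]

lemma clusterRoots_succ_last {ω : Ω} (hu : 1 ≤ u (n + 1) ω) :
    clusterRoots ξ u (n + 1) ω (Fin.last n) =
      (Fin.cons (n + 1) (clusterRoots ξ u n ω) : Fin (n + 1) → ℕ) (retainedParent ξ u n ω) := by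
  cases n with
  | zero => simp [clusterRoots, rootOf, Fin.fin_one_eq_zero (retainedParent ξ u 0 ω)]
  | succ n =>
    change 1 ≤ u (n + 2) ω at hu
    simp only [clusterRoots, Fin.val_last, rootOf, retainedParent]
    split_ifs
    · obtain ⟨k, hk⟩ : ∃ k, min (u (n + 2) ω) (n + 1) = k + 1 := Nat.exists_eq_add_of_le' (by omega)
      have hparent : (⟨min (u (n + 2) ω) (n + 1), by omega⟩ : Fin (n + 2)) =
          Fin.succ ⟨k, by omega⟩ := Fin.ext hk
      rw [hparent, Fin.cons_succ, hk, clusterRoots]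
    · rfl

lemma fiberSizes_clusterRoots_apply_succ (ω : Ω) :
    fiberSizes (clusterRoots ξ u n ω) (n + 1) = 0 := by
  have hlt (i : Fin n) : clusterRoots ξ u n ω i ≠ n + 1 :=
    ((rootOf_le ω (i + 1)).trans_lt (Nat.succ_lt_succ i.isLt)).ne
  simp [fiberSizes_apply, hlt]

lemma clusterPoly_succ {ω : Ω} (hu : 1 ≤ u (n + 1) ω) :
    clusterPoly ξ u (n + 1) ω = chebyshevProd ℝ (fiberSizes (clusterRoots ξ u n ω) +
      single ((Fin.cons (n + 1) (clusterRoots ξ u n ω) : Fin (n + 1) → ℕ)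
        (retainedParent ξ u n ω)) 1) := by
  rw [clusterPoly, fiberSizes_fin_succ, clusterRoots_succ_last hu]
  rfl

/-- The σ-algebra generated by the `ξ_j` and `u_j` with `j ∈ J`. -/
abbrev drivingSigma (ξ : ℕ → Ω → Bool) (u : ℕ → Ω → ℕ) (J : Set ℕ) : MeasurableSpace Ω :=
  ⨆ i ∈ {i : ℕ ⊕ ℕ | i.elim id id ∈ J}, MeasurableSpace.comap (fam ξ u i) inferInstance

lemma measurable_fam_drivingSigma {J : Set ℕ} {i : ℕ ⊕ ℕ} (hi : i.elim id id ∈ J) :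
    Measurable[drivingSigma ξ u J] (fam ξ u i) :=
  Measurable.of_comap_le (le_iSup₂_of_le i hi le_rfl)

lemma measurable_ξ_drivingSigma {J : Set ℕ} {j : ℕ} (hj : j ∈ J) :
    Measurable[drivingSigma ξ u J] (ξ j) :=
  have hproj : Measurable (Sum.elim id fun _ : ℕ => false) :=
    measurable_fun_sum measurable_id measurable_const
  hproj.comp (measurable_fam_drivingSigma (i := .inl j) hj)

lemma measurable_u_drivingSigma {J : Set ℕ} {j : ℕ} (hj : j ∈ J) :
    Measurable[drivingSigma ξ u J] (u j) :=
  have hproj : Measurable (Sum.elim (fun _ : Bool => 0) id) :=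
    measurable_fun_sum measurable_const measurable_id
  hproj.comp (measurable_fam_drivingSigma (i := .inr j) hj)

lemma measurable_retainedParent {m : MeasurableSpace Ω} (hξ : Measurable[m] (ξ (n + 1)))
    (hu : Measurable[m] (u (n + 1))) : Measurable[m] (retainedParent ξ u n) :=
  Measurable.ite (hξ (measurableSet_singleton true))
    ((measurable_of_countable fun k : ℕ => (⟨min k n, by omega⟩ : Fin (n + 1))).comp hu)
    measurable_const

lemma measurable_clusterRoots {m : MeasurableSpace Ω} (hξ : ∀ i ≤ n, Measurable[m] (ξ i))
    (hu : ∀ i ≤ n, Measurable[m] (u i)) : Measurable[m] (clusterRoots ξ u n) :=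
  measurable_pi_lambda _ fun i =>
    measurable_rootOf (fun j hj => hξ j (hj.trans i.isLt)) fun j hj => hu j (hj.trans i.isLt)

variable [MeasurableSpace Ω] {P : Measure Ω} {α : ℝ}

lemma integrable_map_clusterRoots [IsFiniteMeasure P] (hξ : ∀ j, Measurable (ξ j))
    (hu : ∀ j, Measurable (u j)) {F : Type*} [NormedAddCommGroup F] (f : (Fin n → ℕ) → F) :
    Integrable f (P.map (clusterRoots ξ u n)) := by
  have hroots : Measurable (clusterRoots ξ u n) :=
    measurable_clusterRoots (fun j _ => hξ j) fun j _ => hu j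
  obtain ⟨C, hC⟩ := ((Set.finite_Iic fun i : Fin n => (i : ℕ) + 1).image fun v => ‖f v‖).bddAbove
  refine .of_bound .of_discrete C ?_
  rw [ae_map_iff hroots.aemeasurable (Set.to_countable _).measurableSet]
  exact ae_of_all P fun ω => hC ⟨_, fun i => rootOf_le ω (i + 1), rfl⟩

lemma measurableSet_allClustersEven (hξ : ∀ j, Measurable (ξ j)) (hu : ∀ j, Measurable (u j)) :
    MeasurableSet {ω | AllClustersEven ξ u n ω} := by
  simp only [allClustersEven_iff]
  exact measurable_clusterRoots (fun j _ => hξ j) (fun j _ => hu j)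
    (Set.to_countable {v | ∀ r, Even (fiberSizes v r)}).measurableSet

namespace IsForestDriving

lemma measurable_fam (hd : IsForestDriving P α ξ u) (i : ℕ ⊕ ℕ) : Measurable (fam ξ u i) := by
  cases i with
  | inl i => exact measurable_inl.comp (hd.meas_ξ i)
  | inr i => exact measurable_inr.comp (hd.meas_u i)

lemma indep_drivingSigma (hd : IsForestDriving P α ξ u) {J K : Set ℕ} (hJK : Disjoint J K) :
    Indep (drivingSigma ξ u J) (drivingSigma ξ u K) P :=
  indep_iSup_of_disjoint (fun i => (hd.measurable_fam i).comap_le) hd.indep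
    (hJK.preimage _)

lemma indepFun_retainedParent_clusterRoots (hd : IsForestDriving P α ξ u) :
    retainedParent ξ u n ⟂ᵢ[P] clusterRoots ξ u n := by
  have hparent : Measurable[drivingSigma ξ u {n + 1}] (retainedParent ξ u n) :=
    measurable_retainedParent (measurable_ξ_drivingSigma (Set.mem_singleton _))
      (measurable_u_drivingSigma (Set.mem_singleton _))
  have hroots : Measurable[drivingSigma ξ u (Set.Iic n)] (clusterRoots ξ u n) :=
    measurable_clusterRoots (fun _ hj => measurable_ξ_drivingSigma (Set.mem_Iic.mpr hj))
      fun _ hj => measurable_u_drivingSigma (Set.mem_Iic.mpr hj)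
  exact indep_of_indep_of_le_left
    (indep_of_indep_of_le_right (hd.indep_drivingSigma (by simp)) hroots.comap_le)
    hparent.comap_le

lemma measureReal_retainedParent_eq_zero [IsProbabilityMeasure P]
    (hd : IsForestDriving P α ξ u) (hα : 0 ≤ α) (hn : 1 ≤ n) :
    P.real (retainedParent ξ u n ⁻¹' {0}) = 1 - α := by
  have hdeleted : retainedParent ξ u n ⁻¹' {0} = {ω | ξ (n + 1) ω = true}ᶜ :=
    Set.ext fun ω => retainedParent_eq_zero_iff hn (hd.u_range (n + 1) (by omega) ω).1
  have hkept : MeasurableSet {ω | ξ (n + 1) ω = true} :=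
    hd.meas_ξ (n + 1) (measurableSet_singleton true)
  rw [hdeleted, probReal_compl_eq_one_sub hkept, measureReal_def, hd.ξ_law _ (by omega),
    ENNReal.toReal_ofReal hα]

lemma measureReal_retainedParent_eq_succ (hd : IsForestDriving P α ξ u) (hα : 0 ≤ α)
    (i : Fin n) : P.real (retainedParent ξ u n ⁻¹' {i.succ}) = α / n := by
  have hn : 2 ≤ n + 1 := by have := i.isLt; omega
  have hparent : retainedParent ξ u n ⁻¹' {i.succ} =
      {ω | ξ (n + 1) ω = true} ∩ {ω | u (n + 1) ω = i + 1} :=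
    Set.ext fun ω => retainedParent_eq_succ_iff (Nat.le_of_lt_succ (hd.u_range (n + 1) hn ω).2)
  have hindep : P ({ω | ξ (n + 1) ω = true} ∩ {ω | u (n + 1) ω = i + 1}) =
      P {ω | ξ (n + 1) ω = true} * P {ω | u (n + 1) ω = i + 1} := by
    simpa [fam, Set.preimage] using
      (hd.indep.indepFun (Sum.inl_ne_inr (a := n + 1) (b := n + 1))).measure_inter_preimage_eq_mul
        (.inl '' {true}) (.inr '' {(i + 1 : ℕ)}) (measurableSet_singleton _).inl_image
        (measurableSet_singleton _).inr_image
  rw [hparent, measureReal_def, hindep, hd.ξ_law _ hn,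
    hd.u_law _ hn (i + 1) (by omega) (by omega), ENNReal.toReal_mul, ENNReal.toReal_ofReal hα]
  simp [div_eq_mul_inv]

variable [IsProbabilityMeasure P]

lemma integral_clusterPoly_succ (hd : IsForestDriving P α ξ u) (hα : 0 ≤ α) (hn : 1 ≤ n)
    (L : ℝ[X] →ₗ[ℝ] ℝ) :
    ∫ ω, L (clusterPoly ξ u (n + 1) ω) ∂P =
      ∫ ω, L (elephantStep α n (clusterPoly ξ u n ω)) ∂P := by
  have hroots : Measurable (clusterRoots ξ u n) :=
    measurable_clusterRoots (fun j _ => hd.meas_ξ j) fun j _ => hd.meas_u j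
  have hmap (f : (Fin n → ℕ) → ℝ) : Integrable f (P.map (clusterRoots ξ u n)) :=
    integrable_map_clusterRoots hd.meas_ξ hd.meas_u f
  have hcomp (f : (Fin n → ℕ) → ℝ) : Integrable (fun ω => f (clusterRoots ξ u n ω)) P :=
    (hmap f).comp_measurable hroots
  -- The new vertex `n + 1` joins the cluster of its parent or, labelled `0`, starts a new one.
  let attach (k : Fin (n + 1)) (v : Fin n → ℕ) : ℝ :=
    L (chebyshevProd ℝ (fiberSizes v + single ((Fin.cons (n + 1) v : Fin (n + 1) → ℕ) k) 1))
  have hnew (ω : Ω) : attach 0 (clusterRoots ξ u n ω) = L (X * clusterPoly ξ u n ω) := by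
    simp only [attach, Fin.cons_zero]
    rw [chebyshevProd_add_single_of_eq_zero (fiberSizes_clusterRoots_apply_succ ω), clusterPoly]
  calc ∫ ω, L (clusterPoly ξ u (n + 1) ω) ∂P
      = ∫ ω, attach (retainedParent ξ u n ω) (clusterRoots ξ u n ω) ∂P :=
        integral_congr_ae <| ae_of_all P fun ω =>
          congrArg L (clusterPoly_succ (hd.u_range (n + 1) (by omega) ω).1)
    _ = ∑ k, P.real (retainedParent ξ u n ⁻¹' {k}) •
          ∫ ω, attach k (clusterRoots ξ u n ω) ∂P :=
        integral_eq_sum_measureReal_smul_of_indepFun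
          (measurable_retainedParent (hd.meas_ξ _) (hd.meas_u _)) hroots.aemeasurable
          hd.indepFun_retainedParent_clusterRoots fun k => hmap (attach k)
    _ = (1 - α) • ∫ ω, L (X * clusterPoly ξ u n ω) ∂P +
          (α / n) • ∑ i : Fin n, ∫ ω, attach i.succ (clusterRoots ξ u n ω) ∂P := by
        simp only [Fin.sum_univ_succ, hd.measureReal_retainedParent_eq_zero hα hn,
          hd.measureReal_retainedParent_eq_succ hα, Finset.smul_sum, hnew]
    _ = ∫ ω, (1 - α) • L (X * clusterPoly ξ u n ω) +
          (α / n) • ∑ i : Fin n, attach i.succ (clusterRoots ξ u n ω) ∂P := by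
        rw [integral_add, integral_smul, integral_smul, integral_finsetSum _ fun i _ => hcomp _]
        · exact hcomp fun v => (1 - α) • L (X * chebyshevProd ℝ (fiberSizes v))
        · exact hcomp fun v => (α / n) • ∑ i : Fin n, attach i.succ v
    _ = ∫ ω, L (elephantStep α n (clusterPoly ξ u n ω)) ∂P := by
        simp [attach, clusterPoly, elephantStep_chebyshevProd_fiberSizes α hn]

/-- The functional `L` replaces a polynomial-valued expectation, as `ℝ[X]` carries no norm. Letting
it vary is what carries the derivative in `elephantStep` through the induction. -/
lemma map_elephantPoly_eq_integral (hd : IsForestDriving P α ξ u) (hα : 0 ≤ α) (hn : 1 ≤ n)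
    (L : ℝ[X] →ₗ[ℝ] ℝ) :
    L (elephantPoly α n) = ∫ ω, L (clusterPoly ξ u n ω) ∂P := by
  induction n, hn using Nat.le_induction generalizing L with
  | base => simp [elephantPoly, clusterPoly, fiberSizes, chebyshevProd]
  | succ n hn ih =>
    rw [elephantPoly_succ, hd.integral_clusterPoly_succ hα hn]
    exact ih (L ∘ₗ elephantStep α n)

lemma I_pow_mul_eval_zero_elephantPoly (hd : IsForestDriving P α ξ u) (hα : 0 ≤ α) (hn : 1 ≤ n) :
    Complex.I ^ n * ((elephantPoly α n).eval 0 : ℝ) = P.real {ω | AllClustersEven ξ u n ω} :=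
  calc Complex.I ^ n * ((elephantPoly α n).eval 0 : ℝ)
      = Complex.I ^ n * ∫ ω, (((clusterPoly ξ u n ω).eval 0 : ℝ) : ℂ) ∂P := by
        rw [integral_complex_ofReal]
        congr 2
        exact hd.map_elephantPoly_eq_integral hα hn (leval 0)
    _ = ∫ ω, {ω | AllClustersEven ξ u n ω}.indicator (fun _ => (1 : ℂ)) ω ∂P := by
        simp only [← integral_const_mul, I_pow_mul_eval_zero_clusterPoly]
    _ = P.real {ω | AllClustersEven ξ u n ω} := by
        simp [integral_indicator_const _ (measurableSet_allClustersEven hd.meas_ξ hd.meas_u)]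

end IsForestDriving

end Forest

end RRF

/-- **The elephant polynomials at `0` and even clusters of the percolated random
recursive forest.**  For `α ∈ [0,1)`,
`iⁿ R_n(0) = ℙ(every cluster of 𝔽_n has even size)` for every `n ≥ 1`; in particular
`R_n(0) = 0` when `n` is odd. -/
theorem elephantPoly_zero_even_clusters
    {Ω : Type*} [MeasurableSpace Ω] (P : Measure Ω) [IsProbabilityMeasure P]
    (α : ℝ) (hα0 : 0 ≤ α) (hα1 : α < 1)
    (ξ : ℕ → Ω → Bool) (u : ℕ → Ω → ℕ) (hdrive : IsForestDriving P α ξ u)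
    (n : ℕ) (hn : 1 ≤ n) :
    Complex.I ^ n * (((elephantPoly α n).eval 0 : ℝ) : ℂ)
        = (((P {ω | AllClustersEven ξ u n ω}).toReal : ℝ) : ℂ) ∧
      (Odd n → (elephantPoly α n).eval 0 = 0) := by
  exact ⟨hdrive.I_pow_mul_eval_zero_elephantPoly hα0 hn, eval_zero_elephantPoly_of_odd α⟩
end
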